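/- arXiv:2412.14315 — 2 statements merged into one kernel-verified Lean document; each statement's English description precedes it below -/
import Mathlib

section
/- Suppose the crossing edges of G appear independently, each with probability q (the internal edges may be arbitrary). Then there is a universal constant C > 0 such that for every δ ∈ (0,1), with probability at least 1 − δ, every vertex v ∈ V satisfies λ2 ≤ 2·dout[v] + C·(√(nq·log(n/δ)) + log(n/δ)), where λ2 is the second smallest eigenvalue of the unnormalized Laplacian L of G. -/
open Matrix MeasureTheory
open scoped BigOperators ENNReal Classical

noncomputable section

instance measSG {n : ℕ} : MeasurableSpace (SimpleGraph (Fin n)) := ⊤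

variable {n : ℕ}

/-- Adjacency matrix of a graph, over `ℝ`. -/
def adjM (G : SimpleGraph (Fin n)) : Matrix (Fin n) (Fin n) ℝ :=
  Matrix.of fun v w => if G.Adj v w then 1 else 0

/-- Laplacian of a weighted adjacency matrix. -/
def wlap (W : Matrix (Fin n) (Fin n) ℝ) : Matrix (Fin n) (Fin n) ℝ :=
  Matrix.diagonal (fun v => ∑ w, W v w) - W

/-- Unnormalized Laplacian of a graph. -/
def lap (G : SimpleGraph (Fin n)) : Matrix (Fin n) (Fin n) ℝ := wlap (adjM G)

/-- `eig M k` is the `(k+1)`-st smallest eigenvalue (root of the characteristic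
polynomial, with multiplicity) of `M`; e.g. `eig M 1 = λ₂`. -/
def eig (M : Matrix (Fin n) (Fin n) ℝ) (k : ℕ) : ℝ :=
  (M.charpoly.roots.sort (· ≤ ·)).getD k 0

def IsUnitEigenvector (M : Matrix (Fin n) (Fin n) ℝ) (t : ℝ) (u : Fin n → ℝ) : Prop :=
  M.mulVec u = t • u ∧ ∑ v, (u v) ^ 2 = 1

/-- Membership in the first community `P₁ = {1, …, n/2}`. -/
def inP1 (n : ℕ) (v : Fin n) : Prop := (v : ℕ) < n / 2

/-- `v` and `w` are in the same community. -/
def sameSide (n : ℕ) (v w : Fin n) : Prop := inP1 n v ↔ inP1 n w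

/-- Number of neighbours of `v` in its own community. -/
def din (G : SimpleGraph (Fin n)) (v : Fin n) : ℕ :=
  Nat.card {w : Fin n // G.Adj v w ∧ sameSide n v w}

/-- Number of neighbours of `v` in the other community. -/
def dout (G : SimpleGraph (Fin n)) (v : Fin n) : ℕ :=
  Nat.card {w : Fin n // G.Adj v w ∧ ¬ sameSide n v w}

/-- Degree of `v`. -/
def deg (G : SimpleGraph (Fin n)) (v : Fin n) : ℕ :=
  Nat.card {w : Fin n // G.Adj v w}

/-- `μ` samples each pair `(v,w)`, `v < w`, as an edge independently with probability `P v w`. -/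
def IsEdgeProduct (P : Fin n → Fin n → ℝ) (μ : PMF (SimpleGraph (Fin n))) : Prop :=
  ∀ G : SimpleGraph (Fin n),
    μ G = ∏ e ∈ Finset.univ.filter (fun e : Fin n × Fin n => e.1 < e.2),
      (if G.Adj e.1 e.2 then ENNReal.ofReal (P e.1 e.2) else ENNReal.ofReal (1 - P e.1 e.2))

/-- The edge-probability matrix of a member of the `NSSBM(n,p,p̄,q)` family. -/
def NSSBMprob (n : ℕ) (p pbar q : ℝ) (P : Fin n → Fin n → ℝ) : Prop :=
  (∀ v w, P v w = P w v) ∧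
  (∀ v w : Fin n, v ≠ w → sameSide n v w → p ≤ P v w ∧ P v w ≤ pbar) ∧
  (∀ v w : Fin n, ¬ sameSide n v w → P v w = q)

/-- The ideal second eigenvector `u₂⋆`. -/
def u2star (n : ℕ) : Fin n → ℝ :=
  fun v => if inP1 n v then 1 / Real.sqrt n else -(1 / Real.sqrt n)

/-- Spectral bisection with matrix `M` recovers the planted partition of `G`. -/
def BisectCorrect (n : ℕ) (M : Matrix (Fin n) (Fin n) ℝ) : Prop :=
  ∀ u : Fin n → ℝ, IsUnitEigenvector M (eig M 1) u →
    ({v : Fin n | u v < 0} = {v : Fin n | inP1 n v} ∨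
     {v : Fin n | u v < 0} = {v : Fin n | ¬ inP1 n v})

/-- Off-diagonal part of the probability matrix: the expected adjacency matrix. -/
def offP (P : Fin n → Fin n → ℝ) : Matrix (Fin n) (Fin n) ℝ :=
  Matrix.of fun v w => if v = w then 0 else P v w

/-- Expected unnormalized Laplacian. -/
def expLap (P : Fin n → Fin n → ℝ) : Matrix (Fin n) (Fin n) ℝ := wlap (offP P)

/-- Euclidean norm. -/
def l2 (x : Fin n → ℝ) : ℝ := Real.sqrt (∑ v, (x v) ^ 2)

/-- Inner product. -/
def dotp (x y : Fin n → ℝ) : ℝ := ∑ v, x v * y v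

/-- Entrywise max (ℓ∞) norm. -/
def linf (x : Fin n → ℝ) : ℝ := ⨆ v, |x v|

/-- ℓ2 → ℓ2 operator norm of a matrix. -/
def opNorm (M : Matrix (Fin n) (Fin n) ℝ) : ℝ :=
  ‖LinearMap.toContinuousLinearMap (Matrix.toEuclideanLin M)‖

/-- The crossing edges of `μ` are independent `Bernoulli(q)`, while the internal
edges are arbitrary (possibly depending on the crossing edges). -/
def CrossingProduct (n : ℕ) (q : ℝ) (μ : PMF (SimpleGraph (Fin n))) : Prop :=
  ∃ (ν : PMF (SimpleGraph (Fin n))) (κ : SimpleGraph (Fin n) → PMF (SimpleGraph (Fin n))),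
    IsEdgeProduct (fun v w => if sameSide n v w then 0 else q) ν ∧
    (∀ H, ∀ G ∈ (κ H).support, ∀ v w, ¬ sameSide n v w → ((G.Adj v w) ↔ H.Adj v w)) ∧
    μ = ν.bind κ

/-!
By the min-max principle, `λ₂` is at most the largest Rayleigh quotient of `L` on the plane of
functions constant on `P₁` and on `P₂`; this gives `λ₂ ≤ (4 / n) * X`, where `X` is the number of
crossing edges. For a fixed vertex `v`, the excess `(4 / n) * X - 2 * dout[v]` is a weighted sum of
the indicators of the crossing edges, and so does not see the internal edges. There are `n ^ 2 / 4`
crossing pairs and `n / 2` of them contain `v`, so the weights sum to zero: the excess is centred.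
The weights are at most `2` in absolute value and the sum of their squares is `2 * n - 4`, so
Bernstein's inequality bounds the excess by a multiple of `√(n * q * log (n / δ)) + log (n / δ)`
outside an event of probability `δ / n`, and a union bound over `v` concludes.
-/

/-! ### The min-max principle -/

lemma countP_lt_getD_sort_le {α : Type*} [LinearOrder α] (s : Multiset α) (d : α) {k : ℕ}
    (hk : k < s.card) : s.countP (· < (s.sort (· ≤ ·)).getD k d) ≤ k := by
  have hsorted := (s.pairwise_sort (· ≤ ·)).sortedLE
  have hs : (s.sort (· ≤ ·) : Multiset α) = s := s.sort_eq (· ≤ ·)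
  set l := s.sort (· ≤ ·)
  have hkl : k < l.length := by rwa [← hs, Multiset.coe_card] at hk
  have hdrop : (l.drop k).countP (· < l[k]) = 0 := by
    simp only [List.countP_eq_zero, decide_eq_true_eq, not_lt]
    intro x hx
    obtain ⟨i, hi, rfl⟩ := List.mem_drop_iff_getElem.1 hx
    exact hsorted.getElem_le_getElem_of_le (Nat.le_add_right k i)
  rw [← hs, Multiset.coe_countP, List.getD_eq_getElem l d hkl]
  calc l.countP (· < l[k])
      = (l.take k).countP (· < l[k]) + (l.drop k).countP (· < l[k]) := by
        rw [← List.countP_append, List.take_append_drop]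
    _ ≤ (l.take k).length := by rw [hdrop, add_zero]; exact List.countP_le_length
    _ ≤ k := List.length_take_le k l

lemma card_eigenvalues_lt_eig_le {M : Matrix (Fin n) (Fin n) ℝ} (hM : M.IsHermitian) {k : ℕ}
    (hk : k < n) : Fintype.card {i // hM.eigenvalues i < eig M k} ≤ k := by
  have hroots : M.charpoly.roots = Finset.univ.val.map hM.eigenvalues :=
    hM.roots_charpoly_eq_eigenvalues
  calc Fintype.card {i // hM.eigenvalues i < eig M k}
      = M.charpoly.roots.countP (· < eig M k) := by
        rw [hroots, Multiset.countP_map, Fintype.card_subtype]; rfl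
    _ ≤ k := countP_lt_getD_sort_le M.charpoly.roots 0 (by simpa [hroots] using hk)

lemma dotProduct_eq_sum_orthonormalBasis {ι m : Type*} [Fintype ι] [Fintype m]
    (b : OrthonormalBasis ι ℝ (EuclideanSpace ℝ m)) (x y : m → ℝ) :
    x ⬝ᵥ y = ∑ i, ((b i : m → ℝ) ⬝ᵥ x) * ((b i : m → ℝ) ⬝ᵥ y) := by
  have h := b.sum_inner_mul_inner (WithLp.toLp 2 x) (WithLp.toLp 2 y)
  simp only [EuclideanSpace.inner_eq_star_dotProduct, star_trivial] at h
  rw [dotProduct_comm x y, ← h]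
  simp only [dotProduct_comm]

lemma dotProduct_mulVec_eq_sum_eigenvalues {m : Type*} [Fintype m] [DecidableEq m]
    {M : Matrix m m ℝ} (hM : M.IsHermitian) (x : m → ℝ) :
    x ⬝ᵥ M *ᵥ x = ∑ i, hM.eigenvalues i * ((hM.eigenvectorBasis i : m → ℝ) ⬝ᵥ x) ^ 2 := by
  have hself (i : m) : (hM.eigenvectorBasis i : m → ℝ) ⬝ᵥ M *ᵥ x
      = hM.eigenvalues i * ((hM.eigenvectorBasis i : m → ℝ) ⬝ᵥ x) := by
    have hMt : Mᵀ = M := by simpa only [conjTranspose_eq_transpose_of_trivial] using hM.eq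
    rw [dotProduct_mulVec, ← mulVec_transpose, hMt, hM.mulVec_eigenvectorBasis, smul_dotProduct,
      smul_eq_mul]
  rw [dotProduct_eq_sum_orthonormalBasis hM.eigenvectorBasis]
  refine Finset.sum_congr rfl fun i _ => ?_
  rw [hself]
  ring

lemma exists_mem_ne_zero_forall_dotProduct_eq_zero {K ι m : Type*} [Field K] [Fintype ι]
    [Fintype m] (S : Submodule K (m → K)) (u : ι → m → K)
    (hS : Fintype.card ι < Module.finrank K S) :
    ∃ x ∈ S, x ≠ 0 ∧ ∀ i, u i ⬝ᵥ x = 0 := by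
  have hker : LinearMap.ker ((Matrix.of u).mulVecLin.domRestrict S) ≠ ⊥ :=
    LinearMap.ker_ne_bot_of_finrank_lt (by rwa [Module.finrank_fintype_fun_eq_card])
  obtain ⟨x, hx, hx0⟩ := Submodule.exists_mem_ne_zero_of_ne_bot hker
  exact ⟨x, x.2, by simpa using hx0, congrFun (LinearMap.mem_ker.1 hx)⟩

theorem eig_le_of_forall_mem_dotProduct_mulVec_le {M : Matrix (Fin n) (Fin n) ℝ}
    (hM : M.IsHermitian) {k : ℕ} {r : ℝ} (S : Submodule ℝ (Fin n → ℝ))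
    (hk : k < Module.finrank ℝ S) (hS : ∀ x ∈ S, x ⬝ᵥ M *ᵥ x ≤ r * (x ⬝ᵥ x)) :
    eig M k ≤ r := by
  have hkn : k < n := hk.trans_le (by simpa using S.finrank_le)
  obtain ⟨x, hxS, hx0, hx⟩ := exists_mem_ne_zero_forall_dotProduct_eq_zero S
    (fun i : {i // hM.eigenvalues i < eig M k} => (hM.eigenvectorBasis i : Fin n → ℝ))
    ((card_eigenvalues_lt_eig_le hM hkn).trans_lt hk)
  have hlower : eig M k * (x ⬝ᵥ x) ≤ x ⬝ᵥ M *ᵥ x := by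
    rw [dotProduct_mulVec_eq_sum_eigenvalues hM,
      dotProduct_eq_sum_orthonormalBasis hM.eigenvectorBasis, Finset.mul_sum]
    refine Finset.sum_le_sum fun i _ => ?_
    rw [← sq]
    rcases lt_or_ge (hM.eigenvalues i) (eig M k) with hi | hi
    · simp [hx ⟨i, hi⟩]
    · exact mul_le_mul_of_nonneg_right hi (sq_nonneg _)
  have hpos : 0 < x ⬝ᵥ x := by simpa using dotProduct_star_self_pos_iff.2 hx0
  exact le_of_mul_le_mul_right (hlower.trans (hS x hxS)) hpos

/-! ### Cuts -/

lemma lap_eq_lapMatrix (G : SimpleGraph (Fin n)) : lap G = G.lapMatrix ℝ := by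
  ext i j
  simp [lap, wlap, adjM, SimpleGraph.lapMatrix, SimpleGraph.degMatrix, SimpleGraph.adjMatrix_apply,
    SimpleGraph.degree_eq_sum_if_adj]

section Cut

variable {V R : Type*} [Fintype V] [DecidableEq V] {s : Finset V} {a b : R} {x : V → R}

lemma dotProduct_self_of_const_on_cut [CommSemiring R] (ha : ∀ v ∈ s, x v = a)
    (hb : ∀ v ∉ s, x v = b) : x ⬝ᵥ x = a ^ 2 * s.card + b ^ 2 * sᶜ.card := by
  have hsa : ∑ v ∈ s, x v * x v = ∑ _v ∈ s, a ^ 2 :=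
    Finset.sum_congr rfl fun v hv => by rw [ha v hv, sq]
  have hsb : ∑ v ∈ sᶜ, x v * x v = ∑ _v ∈ sᶜ, b ^ 2 :=
    Finset.sum_congr rfl fun v hv => by rw [hb v (Finset.mem_compl.1 hv), sq]
  rw [dotProduct, ← Finset.sum_add_sum_compl s, hsa, hsb]
  simp only [Finset.sum_const, nsmul_eq_mul, mul_comm]

lemma dotProduct_lapMatrix_mulVec_of_const_on_cut [Field R] [CharZero R] (G : SimpleGraph V)
    [DecidableRel G.Adj] (ha : ∀ v ∈ s, x v = a) (hb : ∀ v ∉ s, x v = b) :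
    x ⬝ᵥ G.lapMatrix R *ᵥ x = (a - b) ^ 2 * (G.interedges s sᶜ).card := by
  have hcard (t u : Finset V) : ((G.interedges t u).card : R)
      = ∑ v, ∑ w, if v ∈ t ∧ w ∈ u ∧ G.Adj v w then 1 else 0 := by
    rw [← Fintype.sum_prod_type' (f := fun v w => if v ∈ t ∧ w ∈ u ∧ G.Adj v w then (1 : R) else 0),
      Finset.sum_boole]
    congr 2
    ext e
    simp [SimpleGraph.mem_interedges_iff]
  have hterm (v w : V) : (if G.Adj v w then (x v - x w) ^ 2 else 0)
      = (a - b) ^ 2 * ((if v ∈ s ∧ w ∈ sᶜ ∧ G.Adj v w then 1 else 0)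
        + if v ∈ sᶜ ∧ w ∈ s ∧ G.Adj v w then 1 else 0) := by
    by_cases hv : v ∈ s <;> by_cases hw : w ∈ s <;> simp [*, sub_sq_comm b a]
  have hcomm : (G.interedges sᶜ s).card = (G.interedges s sᶜ).card :=
    have := G.symm
    Rel.card_interedges_comm sᶜ s
  rw [← toLinearMap₂'_apply', SimpleGraph.lapMatrix_toLinearMap₂']
  simp only [hterm, ← Finset.mul_sum, Finset.sum_add_distrib, ← hcard]
  rw [hcomm]
  ring

end Cut

lemma sub_sq_le_inv_add_inv_mul {p q : ℝ} (hp : 0 < p) (hq : 0 < q) (a b : ℝ) :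
    (a - b) ^ 2 ≤ (p⁻¹ + q⁻¹) * (a ^ 2 * p + b ^ 2 * q) := by
  have h : (p⁻¹ + q⁻¹) * (a ^ 2 * p + b ^ 2 * q) - (a - b) ^ 2 = (a * p + b * q) ^ 2 / (p * q) := by
    field_simp
    ring
  have : 0 ≤ (a * p + b * q) ^ 2 / (p * q) := by positivity
  linarith

theorem eig_one_lap_le_card_interedges (G : SimpleGraph (Fin n)) {s : Finset (Fin n)}
    (hs : s.Nonempty) (hsc : sᶜ.Nonempty) :
    eig (lap G) 1 ≤ ((s.card : ℝ)⁻¹ + (sᶜ.card : ℝ)⁻¹) * (G.interedges s sᶜ).card := by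
  rw [lap_eq_lapMatrix]
  set side : Fin n → Bool := fun v => decide (v ∈ s)
  have hside : Function.Surjective side := by
    obtain ⟨v, hv⟩ := hs
    obtain ⟨w, hw⟩ := hsc
    exact Bool.forall_bool.2 ⟨⟨w, by simpa [side] using hw⟩, ⟨v, by simpa [side] using hv⟩⟩
  refine eig_le_of_forall_mem_dotProduct_mulVec_le (G.isHermitian_lapMatrix ℝ)
    (LinearMap.range (LinearMap.funLeft ℝ ℝ side)) ?_ ?_
  · rw [LinearMap.finrank_range_of_inj (LinearMap.funLeft_injective_of_surjective ℝ ℝ side hside)]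
    simp
  · rintro _ ⟨c, rfl⟩
    have htrue : ∀ v ∈ s, LinearMap.funLeft ℝ ℝ side c v = c true := fun v hv => by
      simp [side, LinearMap.funLeft_apply, hv]
    have hfalse : ∀ v ∉ s, LinearMap.funLeft ℝ ℝ side c v = c false := fun v hv => by
      simp [side, LinearMap.funLeft_apply, hv]
    rw [dotProduct_lapMatrix_mulVec_of_const_on_cut G htrue hfalse,
      dotProduct_self_of_const_on_cut htrue hfalse, mul_right_comm]
    gcongr
    exact sub_sq_le_inv_add_inv_mul (by simpa using hs.card_pos) (by simpa using hsc.card_pos) _ _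

/-! ### Concentration of edge sums -/

lemma sum_simpleGraph_prod_ite_adj {V R : Type*} [Fintype V] [LinearOrder V] [CommSemiring R]
    (f g : V × V → R) :
    ∑ G : SimpleGraph V, ∏ e : V × V with e.1 < e.2, (if G.Adj e.1 e.2 then f e else g e)
      = ∏ e : V × V with e.1 < e.2, (f e + g e) := by
  rw [Finset.prod_add]
  refine Finset.sum_bij'
    (fun G _ => ({e | e.1 < e.2} : Finset (V × V)).filter fun e => G.Adj e.1 e.2)
    (fun t _ => SimpleGraph.fromRel fun x y => (x, y) ∈ t) ?_ ?_ ?_ ?_ ?_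
  · exact fun G _ => Finset.mem_powerset.2 (Finset.filter_subset _ _)
  · simp
  · intro G _
    ext x y
    rcases lt_trichotomy x y with h | rfl | h
    · simp [h, h.ne, h.not_gt]
    · simp
    · simp [h, h.ne', h.not_gt, G.adj_comm]
  · intro t ht
    ext ⟨x, y⟩
    have hlt (z : V × V) (hz : z ∈ t) : z.1 < z.2 := by simpa using Finset.mem_powerset.1 ht hz
    grind [SimpleGraph.fromRel_adj]
  · intro G _
    rw [Finset.prod_ite, ← Finset.filter_not]

/-- The total weight of those pairs in `E` that are edges of `G`, as a random variable in `G`. -/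
def edgeSum {V : Type*} (E : Finset (V × V)) (w : V × V → ℝ) (G : SimpleGraph V) : ℝ :=
  ∑ e ∈ E with G.Adj e.1 e.2, w e

lemma exp_mul_edgeSum {V : Type*} (E : Finset (V × V)) (w : V × V → ℝ) (θ : ℝ)
    (G : SimpleGraph V) :
    Real.exp (θ * edgeSum E w G)
      = ∏ e ∈ E, if G.Adj e.1 e.2 then Real.exp (θ * w e) else 1 := by
  rw [edgeSum, Finset.mul_sum, Real.exp_sum, Finset.prod_filter]

lemma mul_exp_add_one_sub_le {p a : ℝ} (hp : 0 ≤ p) (ha : |a| ≤ 1) :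
    p * Real.exp a + (1 - p) ≤ Real.exp (p * (a + a ^ 2)) := by
  have hquad : Real.exp a ≤ 1 + a + a ^ 2 := by
    linarith [(abs_le.1 (Real.abs_exp_sub_one_sub_id_le ha)).2]
  calc p * Real.exp a + (1 - p) ≤ p * (1 + a + a ^ 2) + (1 - p) := by gcongr
    _ = p * (a + a ^ 2) + 1 := by ring
    _ ≤ Real.exp (p * (a + a ^ 2)) := Real.add_one_le_exp _

lemma exists_bernstein_exponent {S L b : ℝ} (hS : 0 ≤ S) (hL : 0 ≤ L) (hb : 0 < b) :
    ∃ θ, 0 ≤ θ ∧ θ * b ≤ 1 ∧ θ ^ 2 * S - θ * (2 * (√(S * L) + b * L)) ≤ -L := by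
  -- The witness minimises `(θ * √S - √L) ^ 2` subject to `θ * b ≤ 1`.
  obtain ⟨s, hs, rfl⟩ : ∃ s, 0 ≤ s ∧ s ^ 2 = S := ⟨√S, Real.sqrt_nonneg S, Real.sq_sqrt hS⟩
  obtain ⟨l, hl, rfl⟩ : ∃ l, 0 ≤ l ∧ l ^ 2 = L := ⟨√L, Real.sqrt_nonneg L, Real.sq_sqrt hL⟩
  rw [← mul_pow, Real.sqrt_sq (mul_nonneg hs hl)]
  rcases le_or_gt s (b * l) with hsl | hsl
  · refine ⟨b⁻¹, by positivity, (inv_mul_cancel₀ hb.ne').le, ?_⟩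
    have h1 : b⁻¹ * s ≤ l := by rwa [inv_mul_le_iff₀ hb]
    have h2 : b⁻¹ ^ 2 * s ^ 2 - b⁻¹ * (2 * (s * l + b * l ^ 2))
        = (b⁻¹ * s) * (b⁻¹ * s - 2 * l) - 2 * l ^ 2 := by
      field_simp
      ring
    have h0 : 0 ≤ b⁻¹ * s := by positivity
    nlinarith
  · have hs0 : 0 < s := (mul_nonneg hb.le hl).trans_lt hsl
    refine ⟨l / s, by positivity, by rw [div_mul_eq_mul_div, div_le_one hs0]; linarith, ?_⟩
    have h1 : (l / s) ^ 2 * s ^ 2 - l / s * (2 * (s * l + b * l ^ 2))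
        = - l ^ 2 - 2 * (l / s) * (b * l ^ 2) := by
      field_simp
      ring
    have h0 : 0 ≤ 2 * (l / s) * (b * l ^ 2) := by positivity
    linarith

namespace IsEdgeProduct

variable {P : Fin n → Fin n → ℝ} {ν : PMF (SimpleGraph (Fin n))} {E : Finset (Fin n × Fin n)}
  {w : Fin n × Fin n → ℝ}

lemma toReal_apply (hν : IsEdgeProduct P ν) (hP : ∀ v w, P v w ∈ Set.Icc 0 1)
    (G : SimpleGraph (Fin n)) :
    (ν G).toReal = ∏ e : Fin n × Fin n with e.1 < e.2,
      if G.Adj e.1 e.2 then P e.1 e.2 else 1 - P e.1 e.2 := by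
  rw [hν G, ENNReal.toReal_prod]
  refine Finset.prod_congr rfl fun e _ => ?_
  obtain ⟨h0, h1⟩ := hP e.1 e.2
  split_ifs
  · exact ENNReal.toReal_ofReal h0
  · exact ENNReal.toReal_ofReal (sub_nonneg.2 h1)

theorem integral_prod (hν : IsEdgeProduct P ν) (hP : ∀ v w, P v w ∈ Set.Icc 0 1)
    (hE : ∀ e ∈ E, e.1 < e.2) (g : Fin n × Fin n → ℝ) :
    ∫ G, ∏ e ∈ E, (if G.Adj e.1 e.2 then g e else 1) ∂ν.toMeasure
      = ∏ e ∈ E, (P e.1 e.2 * g e + (1 - P e.1 e.2)) := by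
  have hprod (f : Fin n × Fin n → ℝ) :
      ∏ e ∈ E, f e = ∏ e : Fin n × Fin n with e.1 < e.2, if e ∈ E then f e else 1 := by
    rw [← Finset.prod_filter]
    exact Finset.prod_congr (by ext e; simpa using hE e) fun _ _ => rfl
  rw [PMF.integral_eq_sum]
  calc ∑ G, (ν G).toReal • ∏ e ∈ E, (if G.Adj e.1 e.2 then g e else 1)
      = ∑ G : SimpleGraph (Fin n), ∏ e : Fin n × Fin n with e.1 < e.2, if G.Adj e.1 e.2
          then P e.1 e.2 * (if e ∈ E then g e else 1) else 1 - P e.1 e.2 := by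
        refine Finset.sum_congr rfl fun G _ => ?_
        rw [hν.toReal_apply hP, smul_eq_mul, hprod, ← Finset.prod_mul_distrib]
        refine Finset.prod_congr rfl fun e _ => ?_
        split_ifs <;> simp
    _ = ∏ e : Fin n × Fin n with e.1 < e.2,
          (P e.1 e.2 * (if e ∈ E then g e else 1) + (1 - P e.1 e.2)) :=
        sum_simpleGraph_prod_ite_adj _ _
    _ = ∏ e ∈ E, (P e.1 e.2 * g e + (1 - P e.1 e.2)) := by
        rw [hprod]
        refine Finset.prod_congr rfl fun e _ => ?_
        split_ifs <;> simp

theorem mgf_edgeSum (hν : IsEdgeProduct P ν) (hP : ∀ v w, P v w ∈ Set.Icc 0 1)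
    (hE : ∀ e ∈ E, e.1 < e.2) (w : Fin n × Fin n → ℝ) (θ : ℝ) :
    ProbabilityTheory.mgf (edgeSum E w) ν.toMeasure θ
      = ∏ e ∈ E, (P e.1 e.2 * Real.exp (θ * w e) + (1 - P e.1 e.2)) := by
  simp only [ProbabilityTheory.mgf, exp_mul_edgeSum, hν.integral_prod hP hE]

theorem mgf_edgeSum_le (hν : IsEdgeProduct P ν) (hP : ∀ v w, P v w ∈ Set.Icc 0 1)
    (hE : ∀ e ∈ E, e.1 < e.2) {θ : ℝ} (hw : ∀ e ∈ E, |θ * w e| ≤ 1) :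
    ProbabilityTheory.mgf (edgeSum E w) ν.toMeasure θ
      ≤ Real.exp (θ * ∑ e ∈ E, P e.1 e.2 * w e + θ ^ 2 * ∑ e ∈ E, P e.1 e.2 * w e ^ 2) := by
  rw [hν.mgf_edgeSum hP hE]
  calc ∏ e ∈ E, (P e.1 e.2 * Real.exp (θ * w e) + (1 - P e.1 e.2))
      ≤ ∏ e ∈ E, Real.exp (P e.1 e.2 * (θ * w e + (θ * w e) ^ 2)) := by
        refine Finset.prod_le_prod (fun e _ => ?_) fun e he =>
          mul_exp_add_one_sub_le (hP e.1 e.2).1 (hw e he)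
        obtain ⟨h0, h1⟩ := hP e.1 e.2
        exact add_nonneg (mul_nonneg h0 (Real.exp_pos _).le) (sub_nonneg.2 h1)
    _ = Real.exp (θ * ∑ e ∈ E, P e.1 e.2 * w e + θ ^ 2 * ∑ e ∈ E, P e.1 e.2 * w e ^ 2) := by
        rw [← Real.exp_sum, Finset.mul_sum, Finset.mul_sum, ← Finset.sum_add_distrib]
        congr 1
        exact Finset.sum_congr rfl fun e _ => by ring

theorem measureReal_edgeSum_ge_le_exp_neg (hν : IsEdgeProduct P ν)
    (hP : ∀ v w, P v w ∈ Set.Icc 0 1) (hE : ∀ e ∈ E, e.1 < e.2) {b S L : ℝ} (hb : 0 < b)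
    (hw : ∀ e ∈ E, |w e| ≤ b) (hS : ∑ e ∈ E, P e.1 e.2 * w e ^ 2 ≤ S) (hL : 0 ≤ L) :
    ν.toMeasure.real {G | ∑ e ∈ E, P e.1 e.2 * w e + 2 * (√(S * L) + b * L) ≤ edgeSum E w G}
      ≤ Real.exp (-L) := by
  have hS0 : 0 ≤ S := (Finset.sum_nonneg fun e _ =>
    mul_nonneg (hP e.1 e.2).1 (sq_nonneg (w e))).trans hS
  obtain ⟨θ, hθ0, hθb, hθ⟩ := exists_bernstein_exponent hS0 hL hb
  have hθw : ∀ e ∈ E, |θ * w e| ≤ 1 := fun e he => by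
    rw [abs_mul, abs_of_nonneg hθ0]
    exact (mul_le_mul_of_nonneg_left (hw e he) hθ0).trans hθb
  refine (ProbabilityTheory.measure_ge_le_exp_mul_mgf _ hθ0 .of_finite).trans ?_
  refine (mul_le_mul_of_nonneg_left (hν.mgf_edgeSum_le hP hE hθw) (Real.exp_pos _).le).trans ?_
  rw [← Real.exp_add]
  gcongr
  linarith [mul_le_mul_of_nonneg_left hS (sq_nonneg θ)]

end IsEdgeProduct

/-! ### Crossing pairs -/

/-- The first community `P₁`, as a finset. -/
def firstHalf (n : ℕ) : Finset (Fin n) := {v | inP1 n v}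

/-- The pairs in `P₁ × P₂`, so that each crossing pair is listed once, in increasing order. -/
def crossPairs (n : ℕ) : Finset (Fin n × Fin n) := firstHalf n ×ˢ (firstHalf n)ᶜ

lemma mem_firstHalf {v : Fin n} : v ∈ firstHalf n ↔ inP1 n v := by
  simp [firstHalf]

lemma mem_crossPairs {e : Fin n × Fin n} : e ∈ crossPairs n ↔ inP1 n e.1 ∧ ¬ inP1 n e.2 := by
  simp [crossPairs, mem_firstHalf]

lemma lt_of_mem_crossPairs {e : Fin n × Fin n} (he : e ∈ crossPairs n) : e.1 < e.2 := by
  obtain ⟨h1, h2⟩ := mem_crossPairs.1 he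
  exact Fin.lt_def.2 (lt_of_lt_of_le h1 (not_lt.1 h2))

lemma not_sameSide_of_mem_crossPairs {e : Fin n × Fin n} (he : e ∈ crossPairs n) :
    ¬ sameSide n e.1 e.2 := fun h => (mem_crossPairs.1 he).2 (h.1 (mem_crossPairs.1 he).1)

lemma card_firstHalf (hn : Even n) : ((firstHalf n).card : ℝ) = n / 2 := by
  obtain ⟨k, rfl⟩ := hn
  have hk : (firstHalf (k + k)).card = k := by
    have hmin : (firstHalf (k + k)).card = min (k + k) ((k + k) / 2) := by
      rw [← Fin.card_filter_val_lt]
      congr 1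
      ext v
      simp [mem_firstHalf, inP1]
    lia
  rw [hk]
  push_cast
  ring

lemma card_compl_firstHalf (hn : Even n) : (((firstHalf n)ᶜ).card : ℝ) = n / 2 := by
  rw [Finset.card_compl, Nat.cast_sub (Finset.card_le_univ _), card_firstHalf hn, Fintype.card_fin]
  ring

lemma dout_eq_card_crossPairs (G : SimpleGraph (Fin n)) (v : Fin n) :
    dout G v = {e ∈ crossPairs n | G.Adj e.1 e.2 ∧ (e.1 = v ∨ e.2 = v)}.card := by
  rw [dout, Nat.card_eq_fintype_card, Fintype.card_subtype]
  by_cases hv : inP1 n v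
  · refine Finset.card_bij (fun w _ => (v, w)) ?_ ?_ ?_ <;>
      grind [mem_crossPairs, sameSide]
  · refine Finset.card_bij (fun w _ => (w, v)) ?_ ?_ ?_ <;>
      grind [mem_crossPairs, sameSide, G.adj_comm]

lemma dout_top (hn : Even n) (v : Fin n) : (dout ⊤ v : ℝ) = n / 2 := by
  have hcard : dout ⊤ v = if inP1 n v then (firstHalf n)ᶜ.card else (firstHalf n).card := by
    rw [dout, Nat.card_eq_fintype_card, Fintype.card_subtype]
    split_ifs with hv <;> congr 1 <;>
      grind [mem_firstHalf, sameSide, SimpleGraph.top_adj, Finset.mem_compl]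
  rw [hcard, Nat.cast_ite, card_firstHalf hn, card_compl_firstHalf hn, ite_self]

lemma card_crossPairs (hn : Even n) : ((crossPairs n).card : ℝ) = (n / 2) ^ 2 := by
  rw [crossPairs, Finset.card_product, Nat.cast_mul, card_firstHalf hn, card_compl_firstHalf hn, sq]

lemma sum_crossPairs_sub_ite (hn : Even n) (v : Fin n) (c d : ℝ) :
    ∑ e ∈ crossPairs n, (c - if e.1 = v ∨ e.2 = v then d else 0)
      = c * (n / 2) ^ 2 - d * (n / 2) := by
  have hinc : ({e ∈ crossPairs n | e.1 = v ∨ e.2 = v}.card : ℝ) = n / 2 := by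
    rw [← dout_top hn v, dout_eq_card_crossPairs]
    congr 2
    ext e
    simp only [Finset.mem_filter, SimpleGraph.top_adj]
    exact and_congr_right fun he => (and_iff_right (lt_of_mem_crossPairs he).ne).symm
  rw [Finset.sum_sub_distrib, ← Finset.sum_filter, Finset.sum_const, Finset.sum_const,
    nsmul_eq_mul, nsmul_eq_mul, hinc, card_crossPairs hn]
  ring

/-- The coefficient of the crossing pair `e` in `(4 / n) * (number of crossing edges) - 2 * dout v`,
the quantity by which the cut bound on `λ₂` may exceed `2 * dout v`. -/
def crossWeight (v : Fin n) (e : Fin n × Fin n) : ℝ :=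
  4 / n - if e.1 = v ∨ e.2 = v then 2 else 0

lemma edgeSum_crossWeight (v : Fin n) (G : SimpleGraph (Fin n)) :
    edgeSum (crossPairs n) (crossWeight v) G
      = 4 / n * (G.interedges (firstHalf n) (firstHalf n)ᶜ).card - 2 * dout G v := by
  rw [dout_eq_card_crossPairs, ← Finset.filter_filter, SimpleGraph.interedges_def, ← crossPairs]
  simp only [edgeSum, crossWeight, Finset.sum_sub_distrib, ← Finset.sum_filter, Finset.sum_const,
    nsmul_eq_mul]
  ring

lemma sum_crossWeight (hn : Even n) (v : Fin n) : ∑ e ∈ crossPairs n, crossWeight v e = 0 := by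
  simp only [crossWeight, sum_crossPairs_sub_ite hn]
  field_simp
  ring

lemma sum_crossWeight_sq (hn : Even n) (v : Fin n) :
    ∑ e ∈ crossPairs n, crossWeight v e ^ 2 = 2 * n - 4 := by
  have hn0 : (n : ℝ) ≠ 0 := Nat.cast_ne_zero.2 v.pos.ne'
  have hsq (e : Fin n × Fin n) : crossWeight v e ^ 2
      = (4 / (n : ℝ)) ^ 2 - if e.1 = v ∨ e.2 = v then 16 / (n : ℝ) - 4 else 0 := by
    rw [crossWeight]
    split_ifs <;> ring
  simp only [hsq, sum_crossPairs_sub_ite hn]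
  field_simp
  ring

lemma abs_crossWeight_le_two (hn : 2 ≤ n) (v : Fin n) (e : Fin n × Fin n) :
    |crossWeight v e| ≤ 2 := by
  have hn' : (2 : ℝ) ≤ n := mod_cast hn
  have h4 : 4 / (n : ℝ) ≤ 2 := by rw [div_le_iff₀ (by linarith)]; linarith
  have h0 : 0 ≤ 4 / (n : ℝ) := by positivity
  rw [crossWeight, abs_le]
  split_ifs <;> constructor <;> linarith

lemma eig_one_lap_le_two_mul_dout_add (hn : Even n) (G : SimpleGraph (Fin n)) (v : Fin n) :
    eig (lap G) 1 ≤ 2 * dout G v + edgeSum (crossPairs n) (crossWeight v) G := by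
  have hn0 : (0 : ℝ) < n := Nat.cast_pos.2 v.pos
  have hs : (firstHalf n).Nonempty := by
    rw [← Finset.card_pos, ← Nat.cast_pos (α := ℝ), card_firstHalf hn]
    positivity
  have hsc : (firstHalf n)ᶜ.Nonempty := by
    rw [← Finset.card_pos, ← Nat.cast_pos (α := ℝ), card_compl_firstHalf hn]
    positivity
  have hcut := eig_one_lap_le_card_interedges G hs hsc
  rw [card_firstHalf hn, card_compl_firstHalf hn] at hcut
  calc eig (lap G) 1
      ≤ (((n : ℝ) / 2)⁻¹ + ((n : ℝ) / 2)⁻¹)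
          * (G.interedges (firstHalf n) (firstHalf n)ᶜ).card := hcut
    _ = 2 * dout G v + edgeSum (crossPairs n) (crossWeight v) G := by
      rw [edgeSum_crossWeight]
      field_simp
      ring

/-! ### Random crossing edges -/

lemma edgeSum_congr {V : Type*} {E : Finset (V × V)} {G H : SimpleGraph V}
    (h : ∀ e ∈ E, (G.Adj e.1 e.2 ↔ H.Adj e.1 e.2)) (w : V × V → ℝ) :
    edgeSum E w G = edgeSum E w H := by
  rw [edgeSum, edgeSum, Finset.filter_congr h]

lemma toMeasure_bind_eq_of_mem_support_iff {α : Type*} [MeasurableSpace α] {ν : PMF α}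
    {κ : α → PMF α} {s : Set α} (hs : MeasurableSet s)
    (h : ∀ a, ∀ b ∈ (κ a).support, (b ∈ s ↔ a ∈ s)) :
    (ν.bind κ).toMeasure s = ν.toMeasure s := by
  rw [PMF.toMeasure_bind_apply _ _ _ hs, PMF.toMeasure_apply _ hs]
  refine tsum_congr fun a => ?_
  by_cases ha : a ∈ s
  · rw [((κ a).toMeasure_apply_eq_one_iff hs).2 fun b hb => (h a b hb).2 ha,
      Set.indicator_of_mem ha, mul_one]
  · rw [((κ a).toMeasure_apply_eq_zero_iff hs).2
        (Set.disjoint_left.2 fun b hb hbs => ha ((h a b hb).1 hbs)),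
      Set.indicator_of_notMem ha, mul_zero]

lemma one_sub_sum_le_measure_forall {Ω ι : Type*} [MeasurableSpace Ω] [Fintype ι] (μ : Measure Ω)
    [IsProbabilityMeasure μ] (p : ι → Ω → Prop) :
    1 - ∑ i, μ {ω | ¬ p i ω} ≤ μ {ω | ∀ i, p i ω} := by
  have hcompl : {ω | ∀ i, p i ω}ᶜ = ⋃ i, {ω | ¬ p i ω} := by
    ext ω
    simp
  rw [tsub_le_iff_right]
  calc 1 = μ Set.univ := measure_univ.symm
    _ ≤ μ {ω | ∀ i, p i ω} + μ {ω | ∀ i, p i ω}ᶜ := by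
      rw [← Set.union_compl_self {ω | ∀ i, p i ω}]
      exact measure_union_le _ _
    _ ≤ μ {ω | ∀ i, p i ω} + ∑ i, μ {ω | ¬ p i ω} := by
      rw [hcompl]
      gcongr
      exact measure_iUnion_fintype_le μ _

namespace CrossingProduct

variable {q L : ℝ} {μ : PMF (SimpleGraph (Fin n))}

theorem measureReal_edgeSum_crossWeight_ge_le (hμ : CrossingProduct n q μ) (hn : Even n)
    (hq : q ∈ Set.Icc 0 1) (hL : 0 ≤ L) (v : Fin n) :
    μ.toMeasure.real {G | 4 * (√(n * q * L) + L) ≤ edgeSum (crossPairs n) (crossWeight v) G}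
      ≤ Real.exp (-L) := by
  obtain ⟨ν, κ, hν, hκ, rfl⟩ := hμ
  have hn2 : 2 ≤ n := by have := v.pos; obtain ⟨k, rfl⟩ := hn; lia
  have hP (v w : Fin n) : (if sameSide n v w then 0 else q) ∈ Set.Icc (0 : ℝ) 1 := by
    split_ifs <;> simp [hq.1, hq.2]
  have hcross : ∀ e ∈ crossPairs n, (if sameSide n e.1 e.2 then 0 else q) = q := fun e he =>
    if_neg (not_sameSide_of_mem_crossPairs he)
  have hmean : ∑ e ∈ crossPairs n, (if sameSide n e.1 e.2 then 0 else q) * crossWeight v e = 0 := by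
    rw [Finset.sum_congr rfl fun e he => by rw [hcross e he], ← Finset.mul_sum,
      sum_crossWeight hn, mul_zero]
  have hvar : ∑ e ∈ crossPairs n, (if sameSide n e.1 e.2 then 0 else q) * crossWeight v e ^ 2
      ≤ 2 ^ 2 * (n * q) := by
    rw [Finset.sum_congr rfl fun e he => by rw [hcross e he], ← Finset.mul_sum,
      sum_crossWeight_sq hn]
    nlinarith [hq.1, mul_nonneg n.cast_nonneg hq.1]
  have htail := hν.measureReal_edgeSum_ge_le_exp_neg hP (fun _ => lt_of_mem_crossPairs) two_pos
    (fun e _ => abs_crossWeight_le_two hn2 v e) hvar hL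
  have hT : 2 * (√(2 ^ 2 * (n * q) * L) + 2 * L) = 4 * (√(n * q * L) + L) := by
    rw [mul_assoc, Real.sqrt_mul (by norm_num), Real.sqrt_sq zero_le_two]
    ring
  rw [hmean, zero_add, hT] at htail
  rwa [measureReal_def, toMeasure_bind_eq_of_mem_support_iff .of_discrete fun H G hG => ?_,
    ← measureReal_def]
  have hcongr := edgeSum_congr (fun e he => hκ H G hG e.1 e.2 (not_sameSide_of_mem_crossPairs he))
    (crossWeight v)
  rw [Set.mem_ofPred_eq, Set.mem_ofPred_eq, hcongr]

theorem measure_not_eig_one_lap_le (hμ : CrossingProduct n q μ) (hn : Even n)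
    (hq : q ∈ Set.Icc 0 1) (hL : 0 ≤ L) (v : Fin n) :
    μ.toMeasure {G | ¬ eig (lap G) 1 ≤ 2 * dout G v + 4 * (√(n * q * L) + L)}
      ≤ ENNReal.ofReal (Real.exp (-L)) := by
  rw [ENNReal.le_ofReal_iff_toReal_le (measure_ne_top _ _) (Real.exp_pos _).le]
  refine le_trans (measureReal_mono fun G hG => ?_)
    (hμ.measureReal_edgeSum_crossWeight_ge_le hn hq hL v)
  have hcut := eig_one_lap_le_two_mul_dout_add hn G v
  simp only [Set.mem_ofPred_eq, not_le] at hG ⊢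
  linarith

end CrossingProduct

/-- **Lemma (λ₂ versus crossing degrees).**
If the crossing edges appear independently with probability `q` (internal edges arbitrary),
then there is a universal constant `C > 0` such that for every `δ ∈ (0,1)`, with probability
at least `1 - δ`, every vertex `v` satisfies
`λ₂(L) ≤ 2 dout[v] + C(√(nq log(n/δ)) + log(n/δ))`. -/
theorem lambda2_le_dout :
    ∃ C : ℝ, 0 < C ∧ ∀ n : ℕ, Even n →
      ∀ q δ : ℝ, 0 ≤ q → q ≤ 1 → 0 < δ → δ < 1 →
      ∀ μ : PMF (SimpleGraph (Fin n)), CrossingProduct n q μ →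
        1 - ENNReal.ofReal δ ≤ μ.toMeasure {G |
          ∀ v : Fin n,
            eig (lap G) 1 ≤ 2 * (dout G v : ℝ) +
              C * (Real.sqrt ((n : ℝ) * q * Real.log (n / δ)) + Real.log (n / δ))} := by
  refine ⟨4, by norm_num, fun n hn q δ hq0 hq1 hδ0 hδ1 μ hμ => ?_⟩
  refine le_trans (tsub_le_tsub_left ?_ 1) (one_sub_sum_le_measure_forall μ.toMeasure _)
  have hbad (v : Fin n) : μ.toMeasure {G | ¬ eig (lap G) 1 ≤ 2 * dout G v +
      4 * (√(n * q * Real.log (n / δ)) + Real.log (n / δ))} ≤ ENNReal.ofReal (δ / n) := by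
    have hn1 : (1 : ℝ) ≤ n := Nat.one_le_cast.2 v.pos
    have hL : 0 ≤ Real.log (n / δ) := Real.log_nonneg ((one_le_div hδ0).2 (hδ1.le.trans hn1))
    have hexp : Real.exp (-Real.log (n / δ)) = δ / n := by
      rw [Real.exp_neg, Real.exp_log (by positivity), inv_div]
    exact hexp ▸ hμ.measure_not_eig_one_lap_le hn ⟨hq0, hq1⟩ hL v
  calc ∑ v : Fin n, μ.toMeasure {G | ¬ eig (lap G) 1 ≤ 2 * dout G v +
        4 * (√(n * q * Real.log (n / δ)) + Real.log (n / δ))}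
      ≤ ∑ _v : Fin n, ENNReal.ofReal (δ / n) := Finset.sum_le_sum fun v _ => hbad v
    _ = ENNReal.ofReal (n * (δ / n)) := by
      rw [Finset.sum_const, Finset.card_univ, Fintype.card_fin, nsmul_eq_mul,
        ENNReal.ofReal_mul n.cast_nonneg, ENNReal.ofReal_natCast]
    _ ≤ ENNReal.ofReal δ := by
      rw [mul_div_left_comm]
      exact ENNReal.ofReal_le_ofReal (mul_le_of_le_one_right hδ0.le (div_self_le_one _))

end
end

section
/- Let G be a random graph on n vertices in which each pair (i,j) is an edge independently with probability p_{ij}, and let L be its unnormalized Laplacian. There is a universal constant C > 0 such that for all n sufficiently large and any δ ≥ n^{−10}, with probability at least 1 − δ, ‖L − E[L]‖_op ≤ C·(√( n·(max over pairs (i,j) with p_{ij} ≠ 1 of p_{ij})·log(n/δ) ) + log(n/δ)). -/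
open Matrix MeasureTheory
open scoped BigOperators ENNReal Classical

noncomputable section

variable {n : ℕ}

/-!
The centred Laplacian is a sum `X` of independent centred Bernoulli multiples `ξ_e A_e` of edge
Laplacians, with `A_e ≥ 0` and `A_e² = 2 A_e`. In `E tr X^(2m+2) = ∑ e, E ξ_e tr (A_e X^(2m+1))`,
the `e`-th term only sees the change of `X^(2m+1)` when the edge `e` is toggled, and a mean-value
inequality for traces bounds this change by `(2m+1) tr (A_e² (X^(2m) + Y^(2m)))`, where `Y` is the
toggled `X`. Hence, writing `A_e² ≤ K A_e` and `∑ p_e A_e ≤ v`, with the second sum over the `e`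
such that `p_e ≠ 1`,
`E tr X^(2m+2) ≤ (2m+1) K (E tr X^(2m+1) + 2 v E tr X^(2m))`.
Edges of probability one drop out of `v` because their `ξ_e` vanishes almost surely. Here `K = 2`
and `v = n · pm`, as the edge Laplacians of the complete graph sum to at most `n`. The recursion
bounds `E tr X^(2m)` by `n R^(2m)` as long as `m K` is at most of order `R` and `m K v` at most of
order `R²`, and Markov's inequality with `2m ≈ log (n / δ)` gives the tail bound.
-/

section TraceInequalities

open scoped MatrixOrder

variable {ι : Type*} [Fintype ι] {A B X Y : Matrix ι ι ℝ}

lemma trace_mul_nonneg_of_posSemidef (hA : A.PosSemidef) (hB : B.PosSemidef) :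
    0 ≤ (A * B).trace := by
  classical
  obtain ⟨C, rfl⟩ := CStarAlgebra.nonneg_iff_eq_star_mul_self.mp hB.nonneg
  rw [← Matrix.mul_assoc, trace_mul_cycle, star_eq_conjTranspose]
  exact (hA.mul_mul_conjTranspose_same C).trace_nonneg

lemma trace_mul_le_trace_mul_of_le (hAB : A ≤ B) (hX : X.PosSemidef) :
    (A * X).trace ≤ (B * X).trace := by
  have h := trace_mul_nonneg_of_posSemidef (le_iff.mp hAB) hX
  rwa [Matrix.sub_mul, trace_sub, sub_nonneg] at h

variable [DecidableEq ι]

lemma posSemidef_pow_two_mul (hX : X.IsHermitian) (m : ℕ) : (X ^ (2 * m)).PosSemidef := by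
  have h := posSemidef_conjTranspose_mul_self (X ^ m)
  rwa [conjTranspose_pow, hX.eq, ← pow_add, ← two_mul] at h

lemma trace_cfc (hX : X.IsHermitian) (f : ℝ → ℝ) :
    (cfc f X).trace = ∑ i, f (hX.eigenvalues i) := by
  rw [hX.cfc_eq, Matrix.IsHermitian.cfc, Unitary.conjStarAlgAut_apply, trace_mul_cycle,
    Unitary.coe_star_mul_self, one_mul, trace_diagonal]
  rfl

lemma trace_pow_eq_sum_eigenvalues_pow (hX : X.IsHermitian) (k : ℕ) :
    (X ^ k).trace = ∑ i, hX.eigenvalues i ^ k := by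
  rw [← cfc_pow_id (R := ℝ) X k hX.isSelfAdjoint, trace_cfc hX]

open scoped Matrix.Norms.L2Operator in
lemma l2_opNorm_eq_norm_eigenvalues (hX : X.IsHermitian) : ‖X‖ = ‖hX.eigenvalues‖ := by
  conv_lhs => rw [hX.spectral_theorem, Unitary.conjStarAlgAut_apply]
  rw [← Unitary.coe_star, CStarRing.norm_mul_coe_unitary, CStarRing.norm_coe_unitary_mul,
    l2_opNorm_diagonal]
  rfl

open scoped Matrix.Norms.L2Operator in
lemma l2_opNorm_pow_le_trace_pow (hX : X.IsHermitian) {m : ℕ} (hm : m ≠ 0) :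
    ‖X‖ ^ (2 * m) ≤ (X ^ (2 * m)).trace := by
  rw [trace_pow_eq_sum_eigenvalues_pow hX, l2_opNorm_eq_norm_eigenvalues hX]
  rcases isEmpty_or_nonempty ι with h | h
  · simp [Subsingleton.elim hX.eigenvalues 0, hm]
  obtain ⟨i, hi⟩ := Finite.exists_max fun i => ‖hX.eigenvalues i‖
  have hnorm : ‖hX.eigenvalues‖ = ‖hX.eigenvalues i‖ :=
    le_antisymm ((pi_norm_le_iff_of_nonneg (norm_nonneg _)).2 hi) (norm_le_pi_norm _ i)
  rw [hnorm, Real.norm_eq_abs, (even_two_mul m).pow_abs]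
  exact Finset.single_le_sum (f := fun j => hX.eigenvalues j ^ (2 * m))
    (fun j _ => (even_two_mul m).pow_nonneg _) (Finset.mem_univ i)

lemma pow_mul_pow_le_pow_add_pow {k l m : ℕ} (h : k + l = 2 * m) (a b : ℝ) :
    a ^ k * b ^ l ≤ a ^ (2 * m) + b ^ (2 * m) := by
  have hmax : |a| ^ k * |b| ^ l ≤ max |a| |b| ^ (2 * m) := by
    rw [← h, pow_add]
    gcongr
    · exact le_max_left _ _
    · exact le_max_right _ _
  calc a ^ k * b ^ l ≤ |a| ^ k * |b| ^ l := by
        rw [← abs_pow, ← abs_pow, ← abs_mul]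
        exact le_abs_self _
    _ ≤ max |a| |b| ^ (2 * m) := hmax
    _ ≤ |a| ^ (2 * m) + |b| ^ (2 * m) := by
        rcases max_choice |a| |b| with h | h <;> rw [h]
        · exact le_add_of_nonneg_right (by positivity)
        · exact le_add_of_nonneg_left (by positivity)
    _ = a ^ (2 * m) + b ^ (2 * m) := by
        rw [(even_two_mul m).pow_abs, (even_two_mul m).pow_abs]

lemma pow_mul_trace_pow_le (hX : X.IsHermitian) (R : ℝ) {k l m : ℕ} (h : k + l = 2 * m) :
    R ^ k * (X ^ l).trace ≤ (X ^ (2 * m)).trace + Fintype.card ι * R ^ (2 * m) := by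
  rw [trace_pow_eq_sum_eigenvalues_pow hX, trace_pow_eq_sum_eigenvalues_pow hX]
  calc R ^ k * ∑ i, hX.eigenvalues i ^ l
      ≤ ∑ i, (R ^ (2 * m) + hX.eigenvalues i ^ (2 * m)) := by
        rw [Finset.mul_sum]
        exact Finset.sum_le_sum fun i _ => pow_mul_pow_le_pow_add_pow h R _
    _ = ∑ i, hX.eigenvalues i ^ (2 * m) + Fintype.card ι * R ^ (2 * m) := by
        rw [Finset.sum_add_distrib, Finset.sum_const, Finset.card_univ, nsmul_eq_mul, add_comm]

/-- The matrix of the linear map `M` with respect to an eigenbasis of `Y` on the source and one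
of `X` on the target. -/
def inEigenbases (hX : X.IsHermitian) (hY : Y.IsHermitian) (M : Matrix ι ι ℝ) :
    Matrix ι ι ℝ :=
  star (hX.eigenvectorUnitary : Matrix ι ι ℝ) * M * (hY.eigenvectorUnitary : Matrix ι ι ℝ)

lemma trace_mul_transpose_eq_sum_inEigenbases (hX : X.IsHermitian) (hY : Y.IsHermitian)
    (M N : Matrix ι ι ℝ) :
    (M * Nᵀ).trace = ∑ i, ∑ j, inEigenbases hX hY M i j * inEigenbases hX hY N i j := by
  have h : inEigenbases hX hY M * (inEigenbases hX hY N)ᵀ =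
      star (hX.eigenvectorUnitary : Matrix ι ι ℝ) * (M * Nᵀ) * hX.eigenvectorUnitary := by
    have hV : (hY.eigenvectorUnitary : Matrix ι ι ℝ) *
        (hY.eigenvectorUnitary : Matrix ι ι ℝ)ᵀ = 1 :=
      Unitary.coe_mul_star_self hY.eigenvectorUnitary
    simp only [inEigenbases, transpose_mul, star_eq_conjTranspose,
      conjTranspose_eq_transpose_of_trivial, transpose_transpose, Matrix.mul_assoc]
    rw [← Matrix.mul_assoc _ _ (Nᵀ * _), hV, Matrix.one_mul]
  calc (M * Nᵀ).trace
      = (inEigenbases hX hY M * (inEigenbases hX hY N)ᵀ).trace := by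
        rw [h, trace_mul_cycle, ← Unitary.coe_star, Unitary.coe_mul_star_self, Matrix.one_mul]
    _ = ∑ i, ∑ j, inEigenbases hX hY M i j * inEigenbases hX hY N i j := by
        simp only [trace, diag_apply, Matrix.mul_apply, transpose_apply]

lemma inEigenbases_cfc_mul (hX : X.IsHermitian) (hY : Y.IsHermitian) (f : ℝ → ℝ)
    (M : Matrix ι ι ℝ) (i j : ι) :
    inEigenbases hX hY (cfc f X * M) i j =
      f (hX.eigenvalues i) * inEigenbases hX hY M i j := by
  have h : inEigenbases hX hY (cfc f X * M) =
      diagonal (f ∘ hX.eigenvalues) * inEigenbases hX hY M := by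
    rw [hX.cfc_eq, Matrix.IsHermitian.cfc, Unitary.conjStarAlgAut_apply]
    simp only [inEigenbases, ← Matrix.mul_assoc, Unitary.coe_star_mul_self, Matrix.one_mul]
    rfl
  rw [h, diagonal_mul, Function.comp_apply]

lemma inEigenbases_mul_cfc (hX : X.IsHermitian) (hY : Y.IsHermitian) (f : ℝ → ℝ)
    (M : Matrix ι ι ℝ) (i j : ι) :
    inEigenbases hX hY (M * cfc f Y) i j =
      inEigenbases hX hY M i j * f (hY.eigenvalues j) := by
  have h : inEigenbases hX hY (M * cfc f Y) =
      inEigenbases hX hY M * diagonal (f ∘ hY.eigenvalues) := by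
    rw [hY.cfc_eq, Matrix.IsHermitian.cfc, Unitary.conjStarAlgAut_apply]
    simp only [inEigenbases, Matrix.mul_assoc, Unitary.coe_star_mul_self, Matrix.mul_one]
    rfl
  rw [h, mul_diagonal, Function.comp_apply]

lemma inEigenbases_cfc_sub_cfc (hX : X.IsHermitian) (hY : Y.IsHermitian) (f : ℝ → ℝ)
    (i j : ι) :
    inEigenbases hX hY (cfc f X - cfc f Y) i j =
      (f (hX.eigenvalues i) - f (hY.eigenvalues j)) * inEigenbases hX hY 1 i j := by
  have h : inEigenbases hX hY (cfc f X - cfc f Y) =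
      inEigenbases hX hY (cfc f X * 1) - inEigenbases hX hY (1 * cfc f Y) := by
    simp only [inEigenbases, Matrix.mul_one, Matrix.one_mul, Matrix.mul_sub, Matrix.sub_mul]
  rw [h, Matrix.sub_apply, inEigenbases_cfc_mul, inEigenbases_mul_cfc]
  ring

lemma inEigenbases_sub (hX : X.IsHermitian) (hY : Y.IsHermitian) (i j : ι) :
    inEigenbases hX hY (X - Y) i j =
      (hX.eigenvalues i - hY.eigenvalues j) * inEigenbases hX hY 1 i j := by
  have h := inEigenbases_cfc_sub_cfc hX hY (fun x => x) i j
  rwa [cfc_id' ℝ X hX.isSelfAdjoint, cfc_id' ℝ Y hY.isSelfAdjoint] at h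

lemma trace_sub_mul_cfc_sub_cfc (hX : X.IsHermitian) (hY : Y.IsHermitian) (f : ℝ → ℝ) :
    ((X - Y) * (cfc f X - cfc f Y)).trace =
      ∑ i, ∑ j, inEigenbases hX hY 1 i j ^ 2 *
        ((hX.eigenvalues i - hY.eigenvalues j) *
          (f (hX.eigenvalues i) - f (hY.eigenvalues j))) := by
  have hsymm : (cfc f X - cfc f Y)ᵀ = cfc f X - cfc f Y := by
    rw [← conjTranspose_eq_transpose_of_trivial]
    exact (cfc_predicate f X).sub (cfc_predicate f Y)
  rw [← hsymm, trace_mul_transpose_eq_sum_inEigenbases hX hY]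
  refine Finset.sum_congr rfl fun i _ => Finset.sum_congr rfl fun j _ => ?_
  rw [inEigenbases_sub, inEigenbases_cfc_sub_cfc]
  ring

lemma trace_sub_mul_sub_mul_cfc_add_cfc (hX : X.IsHermitian) (hY : Y.IsHermitian) (g : ℝ → ℝ) :
    ((X - Y) * (X - Y) * (cfc g X + cfc g Y)).trace =
      ∑ i, ∑ j, inEigenbases hX hY 1 i j ^ 2 *
        ((hX.eigenvalues i - hY.eigenvalues j) ^ 2 *
          (g (hX.eigenvalues i) + g (hY.eigenvalues j))) := by
  have hXY : (X - Y)ᵀ = X - Y := by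
    rw [← conjTranspose_eq_transpose_of_trivial]
    exact hX.sub hY
  have hgX : (cfc g X)ᵀ = cfc g X := by
    rw [← conjTranspose_eq_transpose_of_trivial]
    exact cfc_predicate g X
  have hgY : (cfc g Y)ᵀ = cfc g Y := by
    rw [← conjTranspose_eq_transpose_of_trivial]
    exact cfc_predicate g Y
  have h : ((X - Y) * (X - Y) * (cfc g X + cfc g Y)).trace =
      ((X - Y) * (cfc g X * (X - Y))ᵀ).trace + ((X - Y) * ((X - Y) * cfc g Y)ᵀ).trace := by
    rw [transpose_mul, transpose_mul, hXY, hgX, hgY, Matrix.mul_add, trace_add,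
      Matrix.mul_assoc _ _ (cfc g X), trace_mul_cycle _ _ (cfc g Y), trace_mul_comm _ (_ * (X - Y)),
      Matrix.mul_assoc]
  rw [h, trace_mul_transpose_eq_sum_inEigenbases hX hY,
    trace_mul_transpose_eq_sum_inEigenbases hX hY, ← Finset.sum_add_distrib]
  refine Finset.sum_congr rfl fun i _ => ?_
  rw [← Finset.sum_add_distrib]
  refine Finset.sum_congr rfl fun j _ => ?_
  rw [inEigenbases_cfc_mul, inEigenbases_mul_cfc, inEigenbases_sub]
  ring

lemma trace_sub_mul_cfc_sub_cfc_le (hX : X.IsHermitian) (hY : Y.IsHermitian) {f g : ℝ → ℝ}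
    (hfg : ∀ a b, (a - b) * (f a - f b) ≤ (a - b) ^ 2 * (g a + g b)) :
    ((X - Y) * (cfc f X - cfc f Y)).trace ≤ ((X - Y) * (X - Y) * (cfc g X + cfc g Y)).trace := by
  rw [trace_sub_mul_cfc_sub_cfc hX hY, trace_sub_mul_sub_mul_cfc_add_cfc hX hY]
  exact Finset.sum_le_sum fun i _ => Finset.sum_le_sum fun j _ =>
    mul_le_mul_of_nonneg_left (hfg _ _) (sq_nonneg _)

lemma sub_mul_pow_sub_pow_le (m : ℕ) (a b : ℝ) :
    (a - b) * (a ^ (2 * m + 1) - b ^ (2 * m + 1)) ≤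
      (a - b) ^ 2 * ((2 * m + 1) * a ^ (2 * m) + (2 * m + 1) * b ^ (2 * m)) := by
  have hterm : ∀ i ∈ Finset.range (2 * m + 1),
      a ^ i * b ^ (2 * m - i) ≤ a ^ (2 * m) + b ^ (2 * m) := fun i hi =>
    pow_mul_pow_le_pow_add_pow (by have := Finset.mem_range.mp hi; lia) a b
  have hsum := Finset.sum_le_card_nsmul _ _ _ hterm
  rw [Finset.card_range, nsmul_eq_mul] at hsum
  push_cast at hsum
  have hgeom := geom_sum₂_mul a b (2 * m + 1)
  rw [Nat.add_sub_cancel] at hgeom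
  rw [← hgeom]
  linear_combination mul_le_mul_of_nonneg_left hsum (sq_nonneg (a - b))

lemma trace_sub_mul_pow_sub_pow_le (hX : X.IsHermitian) (hY : Y.IsHermitian) (m : ℕ) :
    ((X - Y) * (X ^ (2 * m + 1) - Y ^ (2 * m + 1))).trace ≤
      (2 * m + 1) * ((X - Y) * (X - Y) * (X ^ (2 * m) + Y ^ (2 * m))).trace := by
  have h := trace_sub_mul_cfc_sub_cfc_le hX hY (f := fun x => x ^ (2 * m + 1))
    (g := fun x => (2 * m + 1) * x ^ (2 * m)) (sub_mul_pow_sub_pow_le m)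
  rwa [cfc_const_mul _ _ X, cfc_const_mul _ _ Y, cfc_pow_id X _ hX.isSelfAdjoint,
    cfc_pow_id X _ hX.isSelfAdjoint, cfc_pow_id Y _ hY.isSelfAdjoint,
    cfc_pow_id Y _ hY.isSelfAdjoint, ← smul_add, Matrix.mul_smul, trace_smul, smul_eq_mul] at h

end TraceInequalities

section BernoulliSubsets

variable {E : Type*} [DecidableEq E] {p : E → ℝ} {S : Finset E} {e : E}

/-- The centred indicator that `e` belongs to the random subset `S`. -/
def centredIndicator (p : E → ℝ) (e : E) (S : Finset E) : ℝ :=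
  (if e ∈ S then 1 else 0) - p e

lemma abs_centredIndicator_le (hp : p e ∈ Set.Icc 0 1) (he : p e = 1 → e ∈ S) :
    |centredIndicator p e S| ≤ centredIndicator p e S + 2 * if p e ≠ 1 then p e else 0 := by
  by_cases hS : e ∈ S
  · rw [centredIndicator, if_pos hS, abs_of_nonneg (sub_nonneg.2 hp.2)]
    split_ifs <;> linarith [hp.1]
  · rw [centredIndicator, if_neg hS, zero_sub, abs_neg, abs_of_nonneg hp.1, if_pos (mt he hS)]
    linarith

variable [Fintype E]

/-- The probability that the random subset of `E` containing each `e` independently with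
probability `p e` equals `S`. -/
def bernoulliWeight (p : E → ℝ) (S : Finset E) : ℝ :=
  (∏ e ∈ S, p e) * ∏ e ∈ Sᶜ, (1 - p e)

/-- The expectation of `f` over the random subset of `E` with distribution `bernoulliWeight p`. -/
def bernoulliExpect (p : E → ℝ) (f : Finset E → ℝ) : ℝ :=
  ∑ S, bernoulliWeight p S * f S

lemma bernoulliWeight_nonneg (hp : ∀ e, p e ∈ Set.Icc 0 1) (S : Finset E) :
    0 ≤ bernoulliWeight p S :=
  mul_nonneg (Finset.prod_nonneg fun e _ => (hp e).1)
    (Finset.prod_nonneg fun e _ => sub_nonneg.2 (hp e).2)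

lemma sum_bernoulliWeight (p : E → ℝ) : ∑ S, bernoulliWeight p S = 1 := by
  simp only [bernoulliWeight, ← Fintype.prod_add, add_sub_cancel, Finset.prod_const_one]

lemma bernoulliWeight_insert_mul (he : e ∉ S) :
    bernoulliWeight p (insert e S) * (1 - p e) = bernoulliWeight p S * p e := by
  rw [bernoulliWeight, bernoulliWeight, Finset.prod_insert he, Finset.compl_insert,
    ← Finset.mul_prod_erase Sᶜ _ (Finset.mem_compl.2 he)]
  ring

lemma bernoulliWeight_eq_zero_of_eq_one (hpe : p e = 1) (he : e ∉ S) :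
    bernoulliWeight p S = 0 := by
  rw [bernoulliWeight, Finset.prod_eq_zero (Finset.mem_compl.2 he) (sub_eq_zero.2 hpe.symm),
    mul_zero]

lemma bernoulliExpect_const (p : E → ℝ) (c : ℝ) : bernoulliExpect p (fun _ => c) = c := by
  rw [bernoulliExpect, ← Finset.sum_mul, sum_bernoulliWeight, one_mul]

lemma bernoulliExpect_add (p : E → ℝ) (f g : Finset E → ℝ) :
    bernoulliExpect p (fun S => f S + g S) = bernoulliExpect p f + bernoulliExpect p g := by
  simp only [bernoulliExpect, mul_add, Finset.sum_add_distrib]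

lemma bernoulliExpect_const_mul (p : E → ℝ) (c : ℝ) (f : Finset E → ℝ) :
    bernoulliExpect p (fun S => c * f S) = c * bernoulliExpect p f := by
  simp only [bernoulliExpect, Finset.mul_sum, mul_left_comm]

lemma bernoulliExpect_sum {κ : Type*} (s : Finset κ) (p : E → ℝ) (f : κ → Finset E → ℝ) :
    bernoulliExpect p (fun S => ∑ k ∈ s, f k S) = ∑ k ∈ s, bernoulliExpect p (f k) := by
  simp only [bernoulliExpect, Finset.mul_sum]
  exact Finset.sum_comm

lemma bernoulliExpect_mono (hp : ∀ e, p e ∈ Set.Icc 0 1) {f g : Finset E → ℝ}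
    (hfg : ∀ S, f S ≤ g S) : bernoulliExpect p f ≤ bernoulliExpect p g :=
  Finset.sum_le_sum fun S _ => mul_le_mul_of_nonneg_left (hfg S) (bernoulliWeight_nonneg hp S)

lemma bernoulliExpect_eq_sum_insert (p : E → ℝ) (e : E) (f : Finset E → ℝ) :
    bernoulliExpect p f = ∑ S ∈ (Finset.univ.erase e).powerset,
      (bernoulliWeight p S * f S + bernoulliWeight p (insert e S) * f (insert e S)) := by
  rw [bernoulliExpect, ← Finset.powerset_univ, ← Finset.insert_erase (Finset.mem_univ e),
    Finset.sum_powerset_insert (Finset.notMem_erase e _), Finset.sum_add_distrib,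
    Finset.insert_erase (Finset.mem_univ e)]

lemma bernoulliExpect_centredIndicator_mul_le (hp : ∀ e, p e ∈ Set.Icc 0 1)
    {f g : Finset E → ℝ} (hfg : ∀ S, e ∉ S → f (insert e S) - f S ≤ g (insert e S) + g S) :
    bernoulliExpect p (fun S => centredIndicator p e S * f S) ≤
      bernoulliExpect p (fun S => |centredIndicator p e S| * g S) := by
  rw [bernoulliExpect_eq_sum_insert p e, bernoulliExpect_eq_sum_insert p e]
  refine Finset.sum_le_sum fun S hS => ?_
  have he : e ∉ S := fun h => Finset.notMem_erase e _ (Finset.mem_powerset.1 hS h)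
  have hout : centredIndicator p e S = -p e := by rw [centredIndicator, if_neg he, zero_sub]
  have hin : centredIndicator p e (insert e S) = 1 - p e := by
    rw [centredIndicator, if_pos (Finset.mem_insert_self e S)]
  rw [hout, hin, abs_neg, abs_of_nonneg (hp e).1, abs_of_nonneg (sub_nonneg.2 (hp e).2)]
  have hstep := mul_le_mul_of_nonneg_left (hfg S he)
    (mul_nonneg (bernoulliWeight_nonneg hp S) (hp e).1)
  linear_combination hstep +
    (f (insert e S) - g (insert e S)) * bernoulliWeight_insert_mul (p := p) he

lemma bernoulliExpect_abs_centredIndicator_mul_le (hp : ∀ e, p e ∈ Set.Icc 0 1)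
    {g : Finset E → ℝ} (hg : ∀ S, 0 ≤ g S) :
    bernoulliExpect p (fun S => |centredIndicator p e S| * g S) ≤
      bernoulliExpect p (fun S =>
        (centredIndicator p e S + 2 * if p e ≠ 1 then p e else 0) * g S) := by
  refine Finset.sum_le_sum fun S _ => ?_
  by_cases he : p e = 1 → e ∈ S
  · exact mul_le_mul_of_nonneg_left
      (mul_le_mul_of_nonneg_right (abs_centredIndicator_le (hp e) he) (hg S))
      (bernoulliWeight_nonneg hp S)
  · obtain ⟨hpe, heS⟩ := Classical.not_imp.1 he
    simp only [bernoulliWeight_eq_zero_of_eq_one hpe heS, zero_mul, le_refl]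

end BernoulliSubsets

section CentredSum

open scoped MatrixOrder

variable {ι E : Type*} [DecidableEq E] [Fintype E] {p : E → ℝ} {A : E → Matrix ι ι ℝ}

/-- The centred random matrix `∑ e, (1_{e ∈ S} - p e) • A e`, for `S` with distribution
`bernoulliWeight p`. -/
def centredSum (p : E → ℝ) (A : E → Matrix ι ι ℝ) (S : Finset E) : Matrix ι ι ℝ :=
  ∑ e, centredIndicator p e S • A e

lemma isHermitian_centredSum (hA : ∀ e, (A e).IsHermitian) (S : Finset E) :
    (centredSum p A S).IsHermitian :=
  isSelfAdjoint_sum _ fun e _ => (IsSelfAdjoint.all (centredIndicator p e S)).smul (hA e)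

lemma centredSum_insert_sub {S : Finset E} {e : E} (he : e ∉ S) :
    centredSum p A (insert e S) - centredSum p A S = A e := by
  have hdiff : ∀ a, centredIndicator p a (insert e S) - centredIndicator p a S =
      if a = e then 1 else 0 := by
    intro a
    rcases eq_or_ne a e with rfl | ha
    · simp only [centredIndicator, Finset.mem_insert_self, if_true, if_neg he]
      ring
    · simp only [centredIndicator, Finset.mem_insert, ha, false_or, if_false, sub_self]
  simp only [centredSum, ← Finset.sum_sub_distrib, ← sub_smul, hdiff, ite_smul, one_smul,
    zero_smul, Finset.sum_ite_eq', Finset.mem_univ, if_true]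

variable [Fintype ι] [DecidableEq ι] {K v : ℝ}

lemma trace_centredSum_pow_succ (S : Finset E) (k : ℕ) :
    (centredSum p A S ^ (k + 1)).trace =
      ∑ e, centredIndicator p e S * (A e * centredSum p A S ^ k).trace := by
  rw [pow_succ']
  nth_rewrite 1 [centredSum]
  simp only [Finset.sum_mul, trace_sum, Matrix.smul_mul, trace_smul, smul_eq_mul]

lemma trace_mul_centredSum_pow_insert_sub_le (hA : ∀ a, (A a).IsHermitian)
    {e : E} (hK : A e * A e ≤ K • A e) {S : Finset E} (he : e ∉ S) (m : ℕ) :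
    (A e * centredSum p A (insert e S) ^ (2 * m + 1)).trace -
        (A e * centredSum p A S ^ (2 * m + 1)).trace ≤
      (2 * m + 1) * (K * ((A e * centredSum p A (insert e S) ^ (2 * m)).trace +
        (A e * centredSum p A S ^ (2 * m)).trace)) := by
  have hX : ∀ S, (centredSum p A S).IsHermitian := isHermitian_centredSum hA
  have hmean := trace_sub_mul_pow_sub_pow_le (hX (insert e S)) (hX S) m
  rw [centredSum_insert_sub he, Matrix.mul_sub, trace_sub] at hmean
  have hsq := trace_mul_le_trace_mul_of_le hK
    ((posSemidef_pow_two_mul (hX (insert e S)) m).add (posSemidef_pow_two_mul (hX S) m))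
  rw [Matrix.smul_mul, trace_smul, smul_eq_mul, Matrix.mul_add (A e), trace_add] at hsq
  exact hmean.trans (mul_le_mul_of_nonneg_left hsq (by positivity))

lemma bernoulliExpect_centredIndicator_mul_trace_le (hp : ∀ e, p e ∈ Set.Icc 0 1)
    (hA : ∀ e, (A e).PosSemidef) (hK : ∀ e, A e * A e ≤ K • A e) (hK₀ : 0 ≤ K) (m : ℕ) (e : E) :
    bernoulliExpect p (fun S =>
        centredIndicator p e S * (A e * centredSum p A S ^ (2 * m + 1)).trace) ≤
      (2 * m + 1) * K * bernoulliExpect p (fun S =>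
        (centredIndicator p e S + 2 * if p e ≠ 1 then p e else 0) *
          (A e * centredSum p A S ^ (2 * m)).trace) := by
  let g : Finset E → ℝ := fun S => (2 * m + 1) * K * (A e * centredSum p A S ^ (2 * m)).trace
  have hg : ∀ S, 0 ≤ g S := fun S =>
    mul_nonneg (by positivity) (trace_mul_nonneg_of_posSemidef (hA e)
      (posSemidef_pow_two_mul (isHermitian_centredSum (fun a => (hA a).isHermitian) S) m))
  have hstep : ∀ S, e ∉ S →
      (A e * centredSum p A (insert e S) ^ (2 * m + 1)).trace -
        (A e * centredSum p A S ^ (2 * m + 1)).trace ≤ g (insert e S) + g S := fun S he =>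
    (trace_mul_centredSum_pow_insert_sub_le (fun a => (hA a).isHermitian) (hK e) he m).trans_eq
      (by ring)
  rw [← bernoulliExpect_const_mul]
  calc bernoulliExpect p (fun S =>
          centredIndicator p e S * (A e * centredSum p A S ^ (2 * m + 1)).trace)
      ≤ bernoulliExpect p (fun S => |centredIndicator p e S| * g S) :=
        bernoulliExpect_centredIndicator_mul_le hp hstep
    _ ≤ bernoulliExpect p (fun S =>
          (centredIndicator p e S + 2 * if p e ≠ 1 then p e else 0) * g S) :=
        bernoulliExpect_abs_centredIndicator_mul_le hp hg
    _ = bernoulliExpect p (fun S => (2 * m + 1) * K *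
          ((centredIndicator p e S + 2 * if p e ≠ 1 then p e else 0) *
            (A e * centredSum p A S ^ (2 * m)).trace)) := by
        simp only [g, mul_left_comm]

lemma sum_centredIndicator_add_mul_trace_le (hA : ∀ e, (A e).IsHermitian)
    (hv : ∑ e with p e ≠ 1, p e • A e ≤ v • (1 : Matrix ι ι ℝ)) (S : Finset E) (m : ℕ) :
    ∑ e, (centredIndicator p e S + 2 * if p e ≠ 1 then p e else 0) *
        (A e * centredSum p A S ^ (2 * m)).trace ≤
      (centredSum p A S ^ (2 * m + 1)).trace +
        2 * v * (centredSum p A S ^ (2 * m)).trace := by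
  have hmean := trace_mul_le_trace_mul_of_le hv
    (posSemidef_pow_two_mul (isHermitian_centredSum (p := p) hA S) m)
  simp only [Finset.sum_filter, Finset.sum_mul, trace_sum, ← ite_zero_smul, Matrix.smul_mul,
    trace_smul, smul_eq_mul, Matrix.one_mul] at hmean
  simp only [add_mul, Finset.sum_add_distrib, ← trace_centredSum_pow_succ, mul_assoc,
    ← Finset.mul_sum]
  gcongr

lemma bernoulliExpect_trace_centredSum_pow_le (hp : ∀ e, p e ∈ Set.Icc 0 1)
    (hA : ∀ e, (A e).PosSemidef) (hK : ∀ e, A e * A e ≤ K • A e) (hK₀ : 0 ≤ K)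
    (hv : ∑ e with p e ≠ 1, p e • A e ≤ v • (1 : Matrix ι ι ℝ)) (m : ℕ) :
    bernoulliExpect p (fun S => (centredSum p A S ^ (2 * m + 2)).trace) ≤
      (2 * m + 1) * K * bernoulliExpect p (fun S =>
        (centredSum p A S ^ (2 * m + 1)).trace + 2 * v * (centredSum p A S ^ (2 * m)).trace) := by
  calc bernoulliExpect p (fun S => (centredSum p A S ^ (2 * m + 2)).trace)
      = ∑ e, bernoulliExpect p (fun S =>
          centredIndicator p e S * (A e * centredSum p A S ^ (2 * m + 1)).trace) := by
        rw [← bernoulliExpect_sum]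
        simp only [← trace_centredSum_pow_succ]
    _ ≤ ∑ e, (2 * m + 1) * K * bernoulliExpect p (fun S =>
          (centredIndicator p e S + 2 * if p e ≠ 1 then p e else 0) *
            (A e * centredSum p A S ^ (2 * m)).trace) :=
        Finset.sum_le_sum fun e _ =>
          bernoulliExpect_centredIndicator_mul_trace_le hp hA hK hK₀ m e
    _ ≤ _ := by
        rw [← Finset.mul_sum, ← bernoulliExpect_sum]
        exact mul_le_mul_of_nonneg_left (bernoulliExpect_mono hp fun S =>
          sum_centredIndicator_add_mul_trace_le (fun e => (hA e).isHermitian) hv S m)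
          (by positivity)

lemma pow_mul_bernoulliExpect_trace_centredSum_pow_le (hp : ∀ e, p e ∈ Set.Icc 0 1)
    (hA : ∀ e, (A e).IsHermitian) (R : ℝ) {k l m : ℕ} (h : k + l = 2 * m) :
    R ^ k * bernoulliExpect p (fun S => (centredSum p A S ^ l).trace) ≤
      bernoulliExpect p (fun S => (centredSum p A S ^ (2 * m)).trace) +
        Fintype.card ι * R ^ (2 * m) := by
  rw [← bernoulliExpect_const_mul, ← bernoulliExpect_const p (Fintype.card ι * R ^ (2 * m)),
    ← bernoulliExpect_add]
  exact bernoulliExpect_mono hp fun S => pow_mul_trace_pow_le (isHermitian_centredSum hA S) R h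

lemma bernoulliExpect_trace_centredSum_pow_le_card_mul_pow (hp : ∀ e, p e ∈ Set.Icc 0 1)
    (hA : ∀ e, (A e).PosSemidef) (hK : ∀ e, A e * A e ≤ K • A e) (hK₀ : 0 ≤ K)
    (hv : ∑ e with p e ≠ 1, p e • A e ≤ v • (1 : Matrix ι ι ℝ)) (hv₀ : 0 ≤ v)
    {m : ℕ} {R : ℝ} (hR : 0 < R) (hKR : 4 * ((2 * m + 1) * K) ≤ R)
    (hvR : 8 * ((2 * m + 1) * K * v) ≤ R ^ 2) :
    bernoulliExpect p (fun S => (centredSum p A S ^ (2 * (m + 1))).trace) ≤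
      Fintype.card ι * R ^ (2 * (m + 1)) := by
  have hAH : ∀ e, (A e).IsHermitian := fun e => (hA e).isHermitian
  set T : ℕ → ℝ := fun l => bernoulliExpect p fun S => (centredSum p A S ^ l).trace
  set D : ℝ := T (2 * (m + 1)) + Fintype.card ι * R ^ (2 * (m + 1))
  change T (2 * (m + 1)) ≤ _
  have hD₀ : 0 ≤ D := add_nonneg
    (Finset.sum_nonneg fun S _ => mul_nonneg (bernoulliWeight_nonneg hp S)
      (posSemidef_pow_two_mul (isHermitian_centredSum hAH S) _).trace_nonneg) (by positivity)
  have hrec : T (2 * (m + 1)) ≤ (2 * m + 1) * K * (T (2 * m + 1) + 2 * v * T (2 * m)) := by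
    have h := bernoulliExpect_trace_centredSum_pow_le hp hA hK hK₀ hv m
    rwa [bernoulliExpect_add, bernoulliExpect_const_mul] at h
  have hodd : R ^ 1 * T (2 * m + 1) ≤ D :=
    pow_mul_bernoulliExpect_trace_centredSum_pow_le hp hAH R (by ring)
  have heven : R ^ 2 * T (2 * m) ≤ D :=
    pow_mul_bernoulliExpect_trace_centredSum_pow_le hp hAH R (by ring)
  have hhalf : R ^ 2 * T (2 * (m + 1)) ≤ R ^ 2 * (D / 2) :=
    calc R ^ 2 * T (2 * (m + 1))
        ≤ R ^ 2 * ((2 * m + 1) * K * (T (2 * m + 1) + 2 * v * T (2 * m))) := by gcongr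
      _ = (2 * m + 1) * K * R * (R ^ 1 * T (2 * m + 1)) +
            2 * ((2 * m + 1) * K * v) * (R ^ 2 * T (2 * m)) := by ring
      _ ≤ (2 * m + 1) * K * R * D + 2 * ((2 * m + 1) * K * v) * D := by gcongr
      _ = ((2 * m + 1) * K * R + 2 * ((2 * m + 1) * K * v)) * D := by ring
      _ ≤ R ^ 2 / 2 * D := mul_le_mul_of_nonneg_right (by nlinarith) hD₀
      _ = R ^ 2 * (D / 2) := by ring
  linarith [le_of_mul_le_mul_left hhalf (by positivity)]

open scoped Matrix.Norms.L2Operator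

lemma pow_mul_sum_bernoulliWeight_lt_norm_centredSum_le (hp : ∀ e, p e ∈ Set.Icc 0 1)
    (hA : ∀ e, (A e).IsHermitian) {t : ℝ} (ht : 0 ≤ t) {m : ℕ} (hm : m ≠ 0) :
    t ^ (2 * m) * ∑ S with t < ‖centredSum p A S‖, bernoulliWeight p S ≤
      bernoulliExpect p (fun S => (centredSum p A S ^ (2 * m)).trace) := by
  have hX : ∀ S, (centredSum p A S).IsHermitian := isHermitian_centredSum hA
  rw [Finset.mul_sum, Finset.sum_filter]
  refine Finset.sum_le_sum fun S _ => ?_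
  split_ifs with hS
  · rw [mul_comm]
    refine mul_le_mul_of_nonneg_left ?_ (bernoulliWeight_nonneg hp S)
    calc t ^ (2 * m) ≤ ‖centredSum p A S‖ ^ (2 * m) := by gcongr
      _ ≤ _ := l2_opNorm_pow_le_trace_pow (hX S) hm
  · exact mul_nonneg (bernoulliWeight_nonneg hp S) (posSemidef_pow_two_mul (hX S) m).trace_nonneg

lemma three_pow_mul_sum_bernoulliWeight_lt_norm_centredSum_le (hp : ∀ e, p e ∈ Set.Icc 0 1)
    (hA : ∀ e, (A e).PosSemidef) (hK : ∀ e, A e * A e ≤ K • A e) (hK₀ : 0 ≤ K)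
    (hv : ∑ e with p e ≠ 1, p e • A e ≤ v • (1 : Matrix ι ι ℝ)) (hv₀ : 0 ≤ v)
    {m : ℕ} {R : ℝ} (hR : 0 < R) (hKR : 4 * ((2 * m + 1) * K) ≤ R)
    (hvR : 8 * ((2 * m + 1) * K * v) ≤ R ^ 2) :
    3 ^ (2 * (m + 1)) * ∑ S with 3 * R < ‖centredSum p A S‖, bernoulliWeight p S ≤
      Fintype.card ι := by
  have hmarkov := (pow_mul_sum_bernoulliWeight_lt_norm_centredSum_le hp
    (fun e => (hA e).isHermitian) (t := 3 * R) (by positivity) m.succ_ne_zero).trans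
    (bernoulliExpect_trace_centredSum_pow_le_card_mul_pow hp hA hK hK₀ hv hv₀ hR hKR hvR)
  rw [mul_pow, mul_right_comm] at hmarkov
  exact le_of_mul_le_mul_right hmarkov (by positivity)

theorem sum_bernoulliWeight_lt_norm_centredSum_le (hp : ∀ e, p e ∈ Set.Icc 0 1)
    (hA : ∀ e, (A e).PosSemidef) (hK : ∀ e, A e * A e ≤ K • A e) (hK₀ : 0 < K)
    (hv : ∑ e with p e ≠ 1, p e • A e ≤ v • (1 : Matrix ι ι ℝ)) (hv₀ : 0 ≤ v)
    {ℓ : ℝ} (hℓ : 1 / 2 ≤ ℓ) :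
    ∑ S with 36 * (√(K * v * ℓ) + K * ℓ) < ‖centredSum p A S‖, bernoulliWeight p S ≤
      Fintype.card ι * Real.exp (-ℓ) := by
  have hℓ₀ : 0 < ℓ := by linarith
  obtain ⟨m, hmℓ, hℓm⟩ : ∃ m : ℕ, 2 * (m : ℝ) ≤ ℓ ∧ ℓ ≤ 2 * (m + 1 : ℕ) :=
    ⟨⌊ℓ / 2⌋₊, by linarith [Nat.floor_le (half_pos hℓ₀).le],
      by push_cast; linarith [Nat.lt_floor_add_one (ℓ / 2)]⟩
  set R : ℝ := 12 * (√(K * v * ℓ) + K * ℓ) with hR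
  have hKR : 4 * ((2 * m + 1) * K) ≤ R := by
    nlinarith [Real.sqrt_nonneg (K * v * ℓ)]
  have hvR : 8 * ((2 * m + 1) * K * v) ≤ R ^ 2 := by
    have hm : (2 * m + 1) * (K * v) ≤ 3 * ℓ * (K * v) := by
      gcongr
      linarith
    have hsqrt : 144 * (K * v * ℓ) ≤ R ^ 2 :=
      calc 144 * (K * v * ℓ) = (12 * √(K * v * ℓ)) ^ 2 := by
            rw [mul_pow, Real.sq_sqrt (by positivity)]
            norm_num
        _ ≤ R ^ 2 := by
            rw [hR]
            gcongr
            exact le_add_of_nonneg_right (by positivity)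
    nlinarith [mul_nonneg hK₀.le hv₀]
  have htail := three_pow_mul_sum_bernoulliWeight_lt_norm_centredSum_le hp hA hK hK₀.le hv hv₀
    (by positivity) hKR hvR
  have hexp : Real.exp ℓ ≤ 3 ^ (2 * (m + 1)) :=
    calc Real.exp ℓ ≤ Real.exp ((2 * (m + 1) : ℕ) * 1) := by
          gcongr
          rwa [mul_one, Nat.cast_mul, Nat.cast_two]
      _ = Real.exp 1 ^ (2 * (m + 1)) := Real.exp_nat_mul _ _
      _ ≤ 3 ^ (2 * (m + 1)) := by gcongr; exact Real.exp_one_lt_three.le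
  have hthreshold : 3 * R = 36 * (√(K * v * ℓ) + K * ℓ) := by ring
  rw [hthreshold] at htail
  rw [Real.exp_neg, ← div_eq_mul_inv, le_div_iff₀' (Real.exp_pos ℓ)]
  refine le_trans (mul_le_mul_of_nonneg_right hexp ?_) htail
  exact Finset.sum_nonneg fun S _ => bernoulliWeight_nonneg hp S

end CentredSum

section EdgeLaplacians

open scoped MatrixOrder

/-- The pairs of distinct vertices, each represented by its increasing ordering. -/
abbrev VertexPair (n : ℕ) : Type := {e : Fin n × Fin n // e.1 < e.2}

lemma sum_sum_eq_two_nsmul_sum_vertexPair {M : Type*} [AddCommMonoid M] {F : Fin n → Fin n → M}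
    (hsymm : ∀ i j, F i j = F j i) (hdiag : ∀ i, F i i = 0) :
    ∑ i, ∑ j, F i j = 2 • ∑ e : VertexPair n, F e.1.1 e.1.2 := by
  have hsplit : ∀ e : Fin n × Fin n,
      F e.1 e.2 = (if e.1 < e.2 then F e.1 e.2 else 0) + if e.2 < e.1 then F e.2 e.1 else 0 := by
    rintro ⟨i, j⟩
    rcases lt_trichotomy i j with h | rfl | h
    · simp only [h, h.asymm, if_true, if_false, add_zero]
    · simp only [hdiag, ite_self, add_zero]
    · simp only [h, h.asymm, if_true, if_false, zero_add, hsymm i j]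
  have hswap : ∑ e : Fin n × Fin n, (if e.2 < e.1 then F e.2 e.1 else 0) =
      ∑ e : Fin n × Fin n, if e.1 < e.2 then F e.1 e.2 else 0 :=
    (Equiv.prodComm (Fin n) (Fin n)).sum_comp fun e => if e.1 < e.2 then F e.1 e.2 else 0
  rw [← Fintype.sum_prod_type', Finset.sum_congr rfl fun e _ => hsplit e,
    Finset.sum_add_distrib, hswap, two_nsmul, ← Finset.sum_filter,
    Finset.sum_subtype {e : Fin n × Fin n | e.1 < e.2} (fun e => Finset.mem_filter_univ e)
      fun e => F e.1 e.2]

/-- The Laplacian of the graph with the single edge `e`. -/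
def edgeLap (e : VertexPair n) : Matrix (Fin n) (Fin n) ℝ :=
  vecMulVec (Pi.single e.1.1 1 - Pi.single e.1.2 1) (Pi.single e.1.1 1 - Pi.single e.1.2 1)

lemma edgeLap_posSemidef (e : VertexPair n) : (edgeLap e).PosSemidef :=
  posSemidef_vecMulVec_self_star _

lemma edgeLap_mul_self (e : VertexPair n) : edgeLap e * edgeLap e = (2 : ℝ) • edgeLap e := by
  have hne : e.1.1 ≠ e.1.2 := e.2.ne
  rw [edgeLap, vecMulVec_mul_vecMulVec, vecMulVec_smul]
  congr 1
  simp only [dotProduct_sub, dotProduct_single, Pi.sub_apply, Pi.single_eq_same,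
    Pi.single_eq_of_ne hne, Pi.single_eq_of_ne hne.symm]
  norm_num

lemma wlap_sub (V W : Matrix (Fin n) (Fin n) ℝ) : wlap (V - W) = wlap V - wlap W := by
  simp only [wlap, Matrix.sub_apply, Finset.sum_sub_distrib, ← diagonal_sub]
  exact sub_sub_sub_comm _ _ _ _

lemma dotProduct_wlap_mulVec (W : Matrix (Fin n) (Fin n) ℝ) (x y : Fin n → ℝ) :
    x ⬝ᵥ wlap W *ᵥ y = ∑ i, ∑ j, W i j * (x i * (y i - y j)) := by
  rw [wlap, sub_mulVec, dotProduct_sub]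
  simp only [dotProduct, mulVec_diagonal]
  simp only [mulVec, dotProduct, ← Finset.sum_sub_distrib, Finset.mul_sum, Finset.sum_mul]
  refine Finset.sum_congr rfl fun i _ => Finset.sum_congr rfl fun j _ => ?_
  ring

lemma two_nsmul_dotProduct_wlap_mulVec {W : Matrix (Fin n) (Fin n) ℝ} (hW : W.IsSymm)
    (x y : Fin n → ℝ) :
    2 • (x ⬝ᵥ wlap W *ᵥ y) = ∑ i, ∑ j, W i j * ((x i - x j) * (y i - y j)) := by
  have hswap : x ⬝ᵥ wlap W *ᵥ y = ∑ i, ∑ j, W i j * (x j * (y j - y i)) := by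
    rw [dotProduct_wlap_mulVec, Finset.sum_comm]
    simp only [hW.apply]
  rw [two_nsmul]
  nth_rewrite 2 [hswap]
  simp only [dotProduct_wlap_mulVec, ← Finset.sum_add_distrib]
  refine Finset.sum_congr rfl fun i _ => Finset.sum_congr rfl fun j _ => ?_
  ring

lemma dotProduct_edgeLap_mulVec (e : VertexPair n) (x y : Fin n → ℝ) :
    x ⬝ᵥ edgeLap e *ᵥ y = (x e.1.1 - x e.1.2) * (y e.1.1 - y e.1.2) := by
  rw [edgeLap, dotProduct_mulVec, vecMul_vecMulVec, smul_dotProduct, dotProduct_sub,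
    dotProduct_single_one, dotProduct_single_one, sub_dotProduct, single_one_dotProduct,
    single_one_dotProduct, smul_eq_mul]

lemma wlap_eq_sum_edgeLap {W : Matrix (Fin n) (Fin n) ℝ} (hW : W.IsSymm) :
    wlap W = ∑ e : VertexPair n, W e.1.1 e.1.2 • edgeLap e := by
  refine ext_iff_mulVec.2 fun y => dotProduct_eq _ _ fun x => ?_
  have hpairs := two_nsmul_dotProduct_wlap_mulVec hW x y
  rw [sum_sum_eq_two_nsmul_sum_vertexPair (fun i j => by rw [hW.apply]; ring)
    (fun i => by ring)] at hpairs
  rw [dotProduct_comm, dotProduct_comm _ x, nsmul_right_injective two_ne_zero hpairs,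
    sum_mulVec, dotProduct_sum]
  simp only [smul_mulVec, dotProduct_smul, dotProduct_edgeLap_mulVec, smul_eq_mul]

lemma sum_edgeLap_le : ∑ e : VertexPair n, edgeLap e ≤ (n : ℝ) • 1 := by
  have hcomplete : ∑ e : VertexPair n, edgeLap e = wlap (vecMulVec 1 1) := by
    rw [wlap_eq_sum_edgeLap (by rw [IsSymm, transpose_vecMulVec])]
    simp [vecMulVec_apply]
  have hJ : (n : ℝ) • 1 - wlap (vecMulVec 1 1) = (vecMulVec 1 1 : Matrix (Fin n) (Fin n) ℝ) := by
    simp [wlap, vecMulVec_apply, smul_one_eq_diagonal]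
  rw [hcomplete, le_iff, hJ]
  exact posSemidef_vecMulVec_self_star 1

lemma sum_smul_edgeLap_le {p : VertexPair n → ℝ} {pm : ℝ} (hpm : 0 ≤ pm)
    (hle : ∀ e, p e ≠ 1 → p e ≤ pm) :
    ∑ e with p e ≠ 1, p e • edgeLap e ≤ (n * pm) • (1 : Matrix (Fin n) (Fin n) ℝ) := by
  calc ∑ e with p e ≠ 1, p e • edgeLap e
      ≤ ∑ e with p e ≠ 1, pm • edgeLap e := Finset.sum_le_sum fun e he =>
        smul_le_smul_of_nonneg_right (hle e (Finset.mem_filter.1 he).2)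
          (edgeLap_posSemidef e).nonneg
    _ ≤ ∑ e, pm • edgeLap e :=
        Finset.sum_le_sum_of_subset_of_nonneg (Finset.filter_subset _ _) fun e _ _ =>
          smul_nonneg hpm (edgeLap_posSemidef e).nonneg
    _ ≤ pm • (n : ℝ) • 1 := by
        rw [← Finset.smul_sum]
        exact smul_le_smul_of_nonneg_left sum_edgeLap_le hpm
    _ = (n * pm) • 1 := by rw [smul_smul, mul_comm]

end EdgeLaplacians

section RandomGraphs

open scoped MatrixOrder Matrix.Norms.L2Operator

variable {P : Fin n → Fin n → ℝ} {μ : PMF (SimpleGraph (Fin n))}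

/-- The set of edges of `G`, as a set of ordered pairs. -/
def edgePairs (G : SimpleGraph (Fin n)) : Finset (VertexPair n) :=
  {e | G.Adj e.1.1 e.1.2}

/-- The edge probabilities `P`, indexed by the pairs of distinct vertices. -/
def edgeProb (P : Fin n → Fin n → ℝ) (e : VertexPair n) : ℝ := P e.1.1 e.1.2

lemma mem_edgePairs {G : SimpleGraph (Fin n)} {e : VertexPair n} :
    e ∈ edgePairs G ↔ G.Adj e.1.1 e.1.2 :=
  Finset.mem_filter_univ e

lemma edgePairs_injective : Function.Injective (edgePairs (n := n)) := by
  have hlt : ∀ {G H : SimpleGraph (Fin n)}, edgePairs G = edgePairs H →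
      ∀ {i j}, i < j → (G.Adj i j ↔ H.Adj i j) := by
    intro G H hGH i j hij
    rw [← mem_edgePairs (e := ⟨(i, j), hij⟩), hGH, mem_edgePairs]
  intro G H hGH
  ext i j
  rcases lt_trichotomy i j with hij | rfl | hij
  · exact hlt hGH hij
  · exact iff_of_false G.irrefl H.irrefl
  · rw [G.adj_comm, H.adj_comm, hlt hGH hij]

lemma IsEdgeProduct.apply_eq_bernoulliWeight (hμ : IsEdgeProduct P μ)
    (hP : ∀ i j, 0 ≤ P i j ∧ P i j ≤ 1) (G : SimpleGraph (Fin n)) :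
    μ G = ENNReal.ofReal (bernoulliWeight (edgeProb P) (edgePairs G)) := by
  rw [hμ G, Finset.prod_subtype {e : Fin n × Fin n | e.1 < e.2}
    (fun e => Finset.mem_filter_univ e), Finset.prod_ite, bernoulliWeight, ENNReal.ofReal_mul,
    ENNReal.ofReal_prod_of_nonneg, ENNReal.ofReal_prod_of_nonneg]
  · rw [edgePairs, Finset.compl_filter]
    rfl
  · exact fun e _ => sub_nonneg.2 (hP _ _).2
  · exact fun e _ => (hP _ _).1
  · exact Finset.prod_nonneg fun e _ => (hP _ _).1

lemma IsEdgeProduct.toMeasure_edgePairs_le (hμ : IsEdgeProduct P μ)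
    (hP : ∀ i j, 0 ≤ P i j ∧ P i j ≤ 1) (q : Finset (VertexPair n) → Prop)
    [DecidablePred q] :
    μ.toMeasure {G | q (edgePairs G)} ≤
      ENNReal.ofReal (∑ S with q S, bernoulliWeight (edgeProb P) S) := by
  have hw : ∀ S, 0 ≤ bernoulliWeight (edgeProb P) S := bernoulliWeight_nonneg fun e => hP _ _
  calc μ.toMeasure {G | q (edgePairs G)}
      = ∑ G with q (edgePairs G), μ G := by
        simp only [PMF.toMeasure_apply_fintype, Finset.sum_filter, Set.indicator_apply,
          Set.mem_ofPred_eq]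
    _ = ENNReal.ofReal (∑ G with q (edgePairs G), bernoulliWeight (edgeProb P) (edgePairs G)) := by
        rw [ENNReal.ofReal_sum_of_nonneg fun G _ => hw _]
        exact Finset.sum_congr rfl fun G _ => hμ.apply_eq_bernoulliWeight hP G
    _ ≤ ENNReal.ofReal (∑ S with q S, bernoulliWeight (edgeProb P) S) := by
        refine ENNReal.ofReal_le_ofReal ?_
        rw [← Finset.sum_image edgePairs_injective.injOn]
        refine Finset.sum_le_sum_of_subset_of_nonneg ?_ fun S _ _ => hw S
        exact Finset.image_subset_iff.2 fun G hG =>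
          (Finset.mem_filter_univ _).2 (Finset.mem_filter.1 hG).2

lemma lap_sub_expLap_eq_centredSum (hsymm : ∀ i j, P i j = P j i) (G : SimpleGraph (Fin n)) :
    lap G - expLap P = centredSum (edgeProb P) edgeLap (edgePairs G) := by
  have hW : (adjM G - offP P).IsSymm := by
    ext i j
    simp only [adjM, offP, transpose_apply, Matrix.sub_apply, of_apply, G.adj_comm j i,
      eq_comm (a := j), hsymm j i]
  rw [lap, expLap, ← wlap_sub, wlap_eq_sum_edgeLap hW, centredSum]
  refine Finset.sum_congr rfl fun e _ => ?_
  simp only [centredIndicator, mem_edgePairs, edgeProb, adjM, offP, Matrix.sub_apply, of_apply,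
    if_neg e.2.ne]

lemma opNorm_eq_l2_opNorm (M : Matrix (Fin n) (Fin n) ℝ) : opNorm M = ‖M‖ := by
  rw [l2_opNorm_def]
  rfl

lemma IsEdgeProduct.toMeasure_lt_opNorm_le (hμ : IsEdgeProduct P μ)
    (hsymm : ∀ i j, P i j = P j i) (hP : ∀ i j, 0 ≤ P i j ∧ P i j ≤ 1) {pm : ℝ} (hpm : 0 ≤ pm)
    (hle : ∀ i j, i ≠ j → P i j ≠ 1 → P i j ≤ pm) {ℓ : ℝ} (hℓ : 1 / 2 ≤ ℓ) :
    μ.toMeasure {G | 36 * (√(2 * (n * pm) * ℓ) + 2 * ℓ) < opNorm (lap G - expLap P)} ≤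
      ENNReal.ofReal (n * Real.exp (-ℓ)) := by
  have htail := sum_bernoulliWeight_lt_norm_centredSum_le (p := edgeProb P) (fun e => hP _ _)
    edgeLap_posSemidef (fun e => (edgeLap_mul_self e).le) two_pos
    (sum_smul_edgeLap_le hpm fun e => hle _ _ e.2.ne) (by positivity) hℓ
  rw [Fintype.card_fin] at htail
  simp only [lap_sub_expLap_eq_centredSum hsymm, opNorm_eq_l2_opNorm]
  have hgraph := hμ.toMeasure_edgePairs_le hP fun S =>
    36 * (√(2 * (n * pm) * ℓ) + 2 * ℓ) < ‖centredSum (edgeProb P) edgeLap S‖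
  exact hgraph.trans (ENNReal.ofReal_le_ofReal htail)

theorem laplacian_concentration_general (hn : 2 ≤ n) (hsymm : ∀ i j, P i j = P j i)
    (hP : ∀ i j, 0 ≤ P i j ∧ P i j ≤ 1) (hμ : IsEdgeProduct P μ) {δ pm : ℝ} (hδ : 0 < δ)
    (hpm : 0 ≤ pm) (hle : ∀ i j, i ≠ j → P i j ≠ 1 → P i j ≤ pm) :
    1 - ENNReal.ofReal δ ≤ μ.toMeasure {G |
      opNorm (lap G - expLap P) ≤ 72 * (√(n * pm * Real.log (n / δ)) + Real.log (n / δ))} := by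
  rcases le_or_gt 1 δ with h1 | h1
  · exact (tsub_eq_zero_of_le (ENNReal.one_le_ofReal.2 h1)).trans_le zero_le
  have hn₀ : (0 : ℝ) < n := by positivity
  set ℓ := Real.log (n / δ) with hℓ
  have hexp : n * Real.exp (-ℓ) = δ := by
    rw [Real.exp_neg, hℓ, Real.exp_log (by positivity), inv_div, mul_div_cancel₀ _ hn₀.ne']
  have hhalf : 1 / 2 ≤ ℓ := by
    have h2 : 2 ≤ n / δ := by
      rw [le_div_iff₀ hδ]
      have : (2 : ℝ) ≤ n := by exact_mod_cast hn
      linarith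
    linarith [Real.log_two_gt_d9, Real.log_le_log two_pos h2]
  have hthreshold : 36 * (√(2 * (n * pm) * ℓ) + 2 * ℓ) ≤ 72 * (√(n * pm * ℓ) + ℓ) := by
    have hsqrt : √(2 * (n * pm) * ℓ) ≤ 2 * √(n * pm * ℓ) := by
      refine Real.sqrt_le_iff.2 ⟨by positivity, ?_⟩
      rw [mul_pow, Real.sq_sqrt (by positivity)]
      nlinarith [show 0 ≤ n * pm * ℓ by positivity]
    linarith
  have hbad := hμ.toMeasure_lt_opNorm_le hsymm hP hpm hle hhalf
  rw [hexp] at hbad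
  calc 1 - ENNReal.ofReal δ
      ≤ μ.toMeasure {G | 36 * (√(2 * (n * pm) * ℓ) + 2 * ℓ) < opNorm (lap G - expLap P)}ᶜ := by
        rw [prob_compl_eq_one_sub MeasurableSpace.measurableSet_top]
        exact tsub_le_tsub_left hbad 1
    _ ≤ μ.toMeasure {G | opNorm (lap G - expLap P) ≤ 72 * (√(n * pm * ℓ) + ℓ)} :=
        measure_mono fun G hG => (not_lt.1 (Set.notMem_ofPred_iff.1 hG)).trans hthreshold

end RandomGraphs

/-- **Lemma (Laplacian concentration).**
For a nonhomogeneous Erdős–Rényi graph with edge probabilities `p_{ij}`, there is a universal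
constant `C > 0` such that for all sufficiently large `n` and any `δ ≥ n⁻¹⁰`, with probability
at least `1 - δ`,
`‖L - E[L]‖_op ≤ C(√(n·(max_{(i,j): p_{ij} ≠ 1} p_{ij})·log(n/δ)) + log(n/δ))`
(stated for every upper bound `pm` on the `p_{ij}` that are not equal to `1`). -/
theorem laplacian_concentration :
    ∃ C : ℝ, 0 < C ∧ ∃ N : ℕ, ∀ n : ℕ, N ≤ n →
      ∀ (P : Fin n → Fin n → ℝ) (μ : PMF (SimpleGraph (Fin n))) (δ pm : ℝ),
        (∀ i j, P i j = P j i) → (∀ i j, 0 ≤ P i j ∧ P i j ≤ 1) →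
        IsEdgeProduct P μ →
        1 / (n : ℝ) ^ 10 ≤ δ →
        0 ≤ pm → (∀ i j : Fin n, i ≠ j → P i j ≠ 1 → P i j ≤ pm) →
        1 - ENNReal.ofReal δ ≤ μ.toMeasure {G |
          opNorm (lap G - expLap P) ≤
            C * (Real.sqrt ((n : ℝ) * pm * Real.log (n / δ)) + Real.log (n / δ))} := by
  exact ⟨72, by norm_num, 2, fun n hn P μ δ pm hsymm hP hμ hδ hpm hle =>
    laplacian_concentration_general hn hsymm hP hμ (lt_of_lt_of_le (by positivity) hδ) hpm hle⟩

end
end
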